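/- arXiv:2507.02015 — 17 statements merged into one kernel-verified Lean document; each statement's English description precedes it below -/
import Mathlib

section
/- Let G be a simple graph on n ≥ 3 vertices that is not complete and has at least one edge. If there is a Marcello step from G to the complete graph on its vertex set (i.e., ϖ(G) = 1), then (∑_{v : 0 < deg_G(v) < n−1} deg_G(v)) + |E(G)| ≥ n(n−1)/2. -/
open SimpleGraph

attribute [local instance] Classical.propDecidable

/-- The degree of a vertex. -/
noncomputable def mdeg {V : Type*} (G : SimpleGraph V) (v : V) : ℕ :=
  (G.neighborSet v).ncard

/-- `G'` is obtained from `G` by a Marcello step. -/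
def MarcelloStep {V : Type*} [Fintype V] (G G' : SimpleGraph V) : Prop :=
  G ≤ G' ∧ ∃ f : Sym2 V → V,
    (∀ e ∈ G'.edgeSet \ G.edgeSet, f e ∈ e) ∧
    (∀ v : V, (∃ e ∈ G'.edgeSet \ G.edgeSet, f e = v) →
        0 < mdeg G v ∧ mdeg G v < Fintype.card V - 1) ∧
    (∀ v : V, ((G'.edgeSet \ G.edgeSet) ∩ {e | f e = v}).ncard ≤ mdeg G v)

/-- There is a Marcello chain of length `k` from `G` to `H`. -/
def MarcelloChain {V : Type*} [Fintype V] (G H : SimpleGraph V) (k : ℕ) : Prop :=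
  ∃ c : ℕ → SimpleGraph V, c 0 = G ∧ c k = H ∧ ∀ i < k, MarcelloStep (c i) (c (i + 1))

/-- The Marcello number `ϖ(G)`. -/
noncomputable def marcelloNumber {V : Type*} [Fintype V] (G : SimpleGraph V) : ℕ :=
  sInf {k | MarcelloChain G (⊤ : SimpleGraph V) k}

/-- The sum of degrees over vertices `v` with `0 < deg v < n - 1`. -/
noncomputable def marcelloSum {V : Type*} [Fintype V] (G : SimpleGraph V) : ℕ :=
  ∑ v ∈ Finset.univ.filter
      (fun v => 0 < mdeg G v ∧ mdeg G v < Fintype.card V - 1), mdeg G v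
/-- If `G` (non-complete, with an edge, on `n ≥ 3` vertices) can be completed by one
Marcello step, then `∑_{0 < deg v < n-1} deg v + |E(G)| ≥ n(n-1)/2`. -/
theorem marcello_step_degree_sum_bound {V : Type*} [Fintype V] (G : SimpleGraph V)
    (hn : 3 ≤ Fintype.card V) (hne : G ≠ ⊤) (hE : G.edgeSet.Nonempty)
    (hstep : MarcelloStep G (⊤ : SimpleGraph V)) :
    Fintype.card V * (Fintype.card V - 1) / 2 ≤ marcelloSum G + G.edgeSet.ncard := by
  obtain ⟨-, f, -, h2, h3⟩ := hstep
  have hsub : G.edgeSet ⊆ (⊤ : SimpleGraph V).edgeSet := edgeSet_mono le_top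
  have h4 : ((⊤ : SimpleGraph V).edgeSet).ncard = Fintype.card V * (Fintype.card V - 1) / 2 := by
    rw [← Nat.choose_two_right, ← card_edgeFinset_top_eq_card_choose_two, ← Set.ncard_coe_finset,
      coe_edgeFinset]
  have h5 := Set.ncard_sdiff_add_ncard_of_subset hsub (Set.toFinite _)
  rw [← h4, ← h5]
  apply Nat.add_le_add_right
  set D := (⊤ : SimpleGraph V).edgeSet \ G.edgeSet with hD
  rw [Set.ncard_eq_toFinset_card' D]
  unfold marcelloSum
  rw [Finset.card_eq_sum_card_fiberwise (f := f)
    (t := Finset.univ.filter (fun v => 0 < mdeg G v ∧ mdeg G v < Fintype.card V - 1))]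
  · apply Finset.sum_le_sum
    intro v _
    refine le_trans (le_of_eq ?_) (h3 v)
    rw [← Set.ncard_coe_finset]
    congr 1
    ext e
    simp
  · intro e he
    have he' : e ∈ D := by simpa using he
    simpa using h2 (f e) ⟨e, he', rfl⟩
end

section
/- Let G be a simple graph on n ≥ 3 vertices. If (∑_{v : 0 < deg_G(v) < n−1} deg_G(v)) + |E(G)| < n(n−1)/2, then there is no Marcello step from G to the complete graph on its vertex set; consequently every Marcello chain from G to the complete graph has length at least 2, i.e., ϖ(G) ≥ 2. -/
open SimpleGraph

attribute [local instance] Classical.propDecidable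

/-- If `∑_{0 < deg v < n-1} deg v + |E(G)| < n(n-1)/2` then no Marcello step completes `G`,
and every Marcello chain from `G` to the complete graph has length at least `2`. -/
theorem no_marcello_step_of_degree_sum_lt {V : Type*} [Fintype V] (G : SimpleGraph V)
    (hn : 3 ≤ Fintype.card V)
    (h : marcelloSum G + G.edgeSet.ncard < Fintype.card V * (Fintype.card V - 1) / 2) :
    ¬ MarcelloStep G (⊤ : SimpleGraph V) ∧
      ∀ k : ℕ, MarcelloChain G (⊤ : SimpleGraph V) k → 2 ≤ k := by
  have htop : (⊤ : SimpleGraph V).edgeSet.ncard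
      = Fintype.card V * (Fintype.card V - 1) / 2 := by
    rw [← Nat.choose_two_right, ← SimpleGraph.card_edgeFinset_top_eq_card_choose_two,
      ← SimpleGraph.coe_edgeFinset, Set.ncard_coe_finset]
  have key : ¬ MarcelloStep G (⊤ : SimpleGraph V) := by
    rintro ⟨hle, f, -, h2, h3⟩
    set D : Set (Sym2 V) := (⊤ : SimpleGraph V).edgeSet \ G.edgeSet with hD
    have hcard : D.ncard + G.edgeSet.ncard = (⊤ : SimpleGraph V).edgeSet.ncard :=
      Set.ncard_sdiff_add_ncard_of_subset (SimpleGraph.edgeSet_mono hle) (Set.toFinite _)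
    have hDle : D.ncard ≤ marcelloSum G := by
      unfold marcelloSum
      rw [Set.ncard_eq_toFinset_card' D, Finset.card_eq_sum_card_fiberwise (f := f)
        (t := Finset.univ.filter
          (fun v => 0 < mdeg G v ∧ mdeg G v < Fintype.card V - 1))]
      · refine Finset.sum_le_sum fun v _ => le_trans (le_of_eq ?_) (h3 v)
        rw [← Set.ncard_coe_finset]
        congr 1
        ext e
        simp
      · intro e he
        have he' : e ∈ D := by simpa using he
        simpa using h2 (f e) ⟨e, he', rfl⟩
    omega
  refine ⟨key, ?_⟩
  rintro k ⟨c, h0, hk, hs⟩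
  by_contra hlt
  have hk2 : k = 0 ∨ k = 1 := by omega
  rcases hk2 with rfl | rfl
  · rw [h0] at hk
    rw [hk] at h
    omega
  · have := hs 0 (by omega)
    rw [zero_add, h0, hk] at this
    exact key this
end

section
/- Let H and G be simple graphs on the same finite vertex set V with E(H) ⊆ E(G) (H is a spanning subgraph of G). If there is a Marcello chain of length k from H to the complete graph on V, then there is a Marcello chain of length at most k from G to the complete graph on V; hence ϖ(G) ≤ ϖ(H). -/
open SimpleGraph

attribute [local instance] Classical.propDecidable

theorem mdeg_mono_aux {V : Type*} [Fintype V] {G G' : SimpleGraph V} (h : G ≤ G') (v : V) :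
    mdeg G v ≤ mdeg G' v :=
  Set.ncard_le_ncard (fun _ hw => h hw) (Set.toFinite _)

theorem mdeg_lt_aux {V : Type*} [Fintype V] {G : SimpleGraph V} {v w : V} (hne : v ≠ w)
    (h : ¬ G.Adj v w) : mdeg G v < Fintype.card V - 1 := by
  have h1 : mdeg G v ≤ (({v, w} : Set V)ᶜ).ncard := by
    refine Set.ncard_le_ncard (fun x hx => ?_) (Set.toFinite _)
    rintro (rfl | hxw)
    · exact G.loopless.irrefl _ hx
    · rw [Set.mem_singleton_iff] at hxw
      subst hxw
      exact h hx
  have h2 := Set.ncard_add_ncard_compl ({v, w} : Set V)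
  rw [Set.ncard_pair hne, Nat.card_eq_fintype_card] at h2
  omega

theorem step_sup_aux {V : Type*} [Fintype V] {A B : SimpleGraph V} (G : SimpleGraph V)
    (h : MarcelloStep A B) : MarcelloStep (A ⊔ G) (B ⊔ G) := by
  obtain ⟨hle, f, hf, hdeg, hcount⟩ := h
  have hsub : (B ⊔ G).edgeSet \ (A ⊔ G).edgeSet ⊆ B.edgeSet \ A.edgeSet := by
    intro e he
    simp only [SimpleGraph.edgeSet_sup, Set.mem_diff, Set.mem_union] at he ⊢
    tauto
  refine ⟨sup_le_sup_right hle G, f, fun e he => hf e (hsub he), ?_, ?_⟩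
  · rintro v ⟨e, he, hv⟩
    refine ⟨lt_of_lt_of_le (hdeg v ⟨e, hsub he, hv⟩).1 (mdeg_mono_aux le_sup_left v), ?_⟩
    have hmem := hf e (hsub he)
    rw [hv] at hmem
    obtain ⟨w, rfl⟩ := hmem
    exact mdeg_lt_aux (SimpleGraph.Adj.ne (G := B ⊔ G) he.1) (fun h => he.2 h)
  · intro v
    refine le_trans (Set.ncard_le_ncard (Set.inter_subset_inter_left _ hsub) (Set.toFinite _)) ?_
    exact (hcount v).trans (mdeg_mono_aux le_sup_left v)

/-- If `H` is a spanning subgraph of `G` and `H` has a Marcello chain of length `k`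
to the complete graph, then `G` has one of length at most `k`. -/
theorem marcello_chain_of_spanning_subgraph {V : Type*} [Fintype V]
    (H G : SimpleGraph V) (hHG : H ≤ G) (k : ℕ)
    (hchain : MarcelloChain H (⊤ : SimpleGraph V) k) :
    ∃ k' ≤ k, MarcelloChain G (⊤ : SimpleGraph V) k' := by
  obtain ⟨c, h0, hk, hs⟩ := hchain
  refine ⟨k, le_rfl, fun i => c i ⊔ G, ?_, ?_, fun i hi => step_sup_aux G (hs i hi)⟩
  · simp only [h0]
    exact sup_eq_right.mpr hHG
  · simp only [hk, top_sup_eq]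
end

section
/- Let G be a simple graph on a finite vertex set V with |V| = n, let V* = {v ∈ V : deg_G(v) = n − 1} be the set of universal vertices, and let H be the subgraph of G induced on V ∖ V*. If there is a Marcello chain of length k from H to the complete graph on V ∖ V*, then there is a Marcello chain of length at most k from G to the complete graph on V; hence ϖ(G) ≤ ϖ(H). -/
open SimpleGraph

attribute [local instance] Classical.propDecidable

/-- Extend a graph on `S` to `V`, making all vertices outside `S` universal. -/
def mlift {V : Type*} {S : Set V} (K : SimpleGraph S) : SimpleGraph V where
  Adj u v := u ≠ v ∧ ∀ (hu : u ∈ S) (hv : v ∈ S), K.Adj ⟨u, hu⟩ ⟨v, hv⟩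
  symm := ⟨fun u v h => ⟨h.1.symm, fun hu hv => (h.2 hv hu).symm⟩⟩
  loopless := ⟨fun u h => h.1 rfl⟩

theorem mlift_new {V : Type*} {S : Set V} (K K' : SimpleGraph S) :
    (mlift K').edgeSet \ (mlift K).edgeSet
      = Sym2.map Subtype.val '' (K'.edgeSet \ K.edgeSet) := by
  ext e
  constructor
  · induction e using Sym2.ind with
    | _ u v =>
      rintro ⟨h1, h2⟩
      simp only [SimpleGraph.mem_edgeSet] at h1 h2
      have : ∃ (hu : u ∈ S) (hv : v ∈ S), ¬ K.Adj ⟨u, hu⟩ ⟨v, hv⟩ := by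
        by_contra hc
        push Not at hc
        exact h2 ⟨h1.1, hc⟩
      obtain ⟨hu, hv, hn⟩ := this
      exact ⟨s(⟨u, hu⟩, ⟨v, hv⟩), ⟨h1.2 hu hv, hn⟩, rfl⟩
  · rintro ⟨e, he, rfl⟩
    induction e using Sym2.ind with
    | _ u v =>
      obtain ⟨h1, h2⟩ := he
      simp only [SimpleGraph.mem_edgeSet] at h1 h2
      refine ⟨?_, ?_⟩
      · exact ⟨fun h => h1.ne (Subtype.ext h), fun _ _ => h1⟩
      · exact fun h => h2 (h.2 u.2 v.2)

theorem mlift_nbr {V : Type*} {S : Set V} (K : SimpleGraph S) (v : S) :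
    (mlift K).neighborSet v.1 = Subtype.val '' K.neighborSet v ∪ Sᶜ := by
  ext w
  constructor
  · intro h
    by_cases hw : w ∈ S
    · exact Or.inl ⟨⟨w, hw⟩, h.2 v.2 hw, rfl⟩
    · exact Or.inr hw
  · rintro (⟨w, hw, rfl⟩ | hw)
    · have hw : K.Adj v w := hw
      exact ⟨fun h => hw.ne (Subtype.ext h), fun _ _ => hw⟩
    · exact ⟨fun h => hw (h ▸ v.2), fun _ h => absurd h hw⟩

theorem mlift_step {V : Type*} [Fintype V] {S : Set V} [Fintype S] (K K' : SimpleGraph S)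
    (h : MarcelloStep K K') : MarcelloStep (mlift K) (mlift K') := by
  obtain ⟨hle, f, h1, h2, h3⟩ := h
  have hinj : Function.Injective (Sym2.map (Subtype.val : S → V)) :=
    Sym2.map.injective Subtype.val_injective
  have hge : ∀ v : S, mdeg K v ≤ mdeg (mlift K) v.1 := by
    intro v
    unfold mdeg
    rw [mlift_nbr, ← Set.ncard_image_of_injective _ Subtype.val_injective]
    exact Set.ncard_le_ncard Set.subset_union_left (Set.toFinite _)
  have hlt : ∀ v : S, mdeg K v < Fintype.card S - 1 →
      mdeg (mlift K) v.1 < Fintype.card V - 1 := by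
    intro v hv
    unfold mdeg at *
    rw [← Set.ncard_image_of_injective _ Subtype.val_injective] at hv
    rw [mlift_nbr]
    have a := Set.ncard_union_le (Subtype.val '' K.neighborSet v) Sᶜ
    have b := Set.ncard_add_ncard_compl S
    have c : S.ncard = Fintype.card S := by
      rw [← Nat.card_coe_set_eq, Nat.card_eq_fintype_card]
    rw [Nat.card_eq_fintype_card] at b
    omega
  let g : Sym2 V → V := fun e =>
    if he : ∃ e0 : Sym2 S, Sym2.map Subtype.val e0 = e then (f he.choose).1 else e.out.1
  have hg : ∀ e0 : Sym2 S, g (Sym2.map Subtype.val e0) = (f e0).1 := by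
    intro e0
    have he : ∃ e1 : Sym2 S, Sym2.map (Subtype.val : S → V) e1 = Sym2.map Subtype.val e0 :=
      ⟨e0, rfl⟩
    have : he.choose = e0 := hinj he.choose_spec
    simp only [g]
    rw [dif_pos he, this]
  refine ⟨?_, g, ?_, ?_, ?_⟩
  · intro u v h
    exact ⟨h.1, fun hu hv => hle (h.2 hu hv)⟩
  · rw [mlift_new]
    rintro _ ⟨e, he, rfl⟩
    rw [hg]
    exact Sym2.mem_map.2 ⟨_, h1 e he, rfl⟩
  · rw [mlift_new]
    rintro _ ⟨_, ⟨e, he, rfl⟩, rfl⟩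
    rw [hg]
    obtain ⟨a, b⟩ := h2 (f e) ⟨e, he, rfl⟩
    exact ⟨a.trans_le (hge _), hlt _ b⟩
  · rw [mlift_new]
    intro v
    by_cases hv : v ∈ S
    · refine le_trans (le_trans ?_ (h3 ⟨v, hv⟩)) (hge ⟨v, hv⟩)
      rw [← Set.ncard_image_of_injective _ hinj]
      refine Set.ncard_le_ncard ?_ (Set.toFinite _)
      rintro _ ⟨⟨e, he, rfl⟩, h⟩
      refine ⟨e, ⟨he, ?_⟩, rfl⟩
      rw [Set.mem_setOf_eq, hg] at h
      exact Subtype.ext h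
    · have : (Sym2.map Subtype.val '' (K'.edgeSet \ K.edgeSet)) ∩ {e | g e = v} = ∅ := by
        rw [Set.eq_empty_iff_forall_notMem]
        rintro _ ⟨⟨e, he, rfl⟩, h⟩
        rw [Set.mem_setOf_eq, hg] at h
        exact hv (h ▸ (f e).2)
      rw [this]
      simp

theorem universal_adj {V : Type*} [Fintype V] (G : SimpleGraph V) (u v : V)
    (hu : mdeg G u = Fintype.card V - 1) (h : u ≠ v) : G.Adj u v := by
  by_contra hn
  have hs : G.neighborSet u ⊆ ({u, v} : Set V)ᶜ := by
    intro w hw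
    have hw : G.Adj u w := hw
    rintro (rfl | rfl)
    · exact hw.ne rfl
    · exact hn hw
  have a := Set.ncard_le_ncard hs (Set.toFinite _)
  have b := Set.ncard_add_ncard_compl ({u, v} : Set V)
  rw [Set.ncard_pair h, Nat.card_eq_fintype_card] at b
  unfold mdeg at hu
  omega

/-- If the subgraph of `G` induced on the non-universal vertices has a Marcello chain
of length `k` to its complete graph, then `G` has one of length at most `k`. -/
theorem marcello_chain_of_induced_on_nonuniversal {V : Type*} [Fintype V]
    (G : SimpleGraph V) (k : ℕ)
    (hchain : MarcelloChain
      (G.induce ({v : V | mdeg G v = Fintype.card V - 1}ᶜ : Set V))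
      (⊤ : SimpleGraph ({v : V | mdeg G v = Fintype.card V - 1}ᶜ : Set V)) k) :
    ∃ k' ≤ k, MarcelloChain G (⊤ : SimpleGraph V) k' := by
  obtain ⟨c, h0, hk, hs⟩ := hchain
  refine ⟨k, le_rfl, fun i => mlift (c i), ?_, ?_, fun i hi => mlift_step _ _ (hs i hi)⟩
  · simp only [h0]
    ext u v
    constructor
    · rintro ⟨h, h'⟩
      by_cases hu : mdeg G u = Fintype.card V - 1
      · exact universal_adj G u v hu h
      by_cases hv : mdeg G v = Fintype.card V - 1
      · exact (universal_adj G v u hv h.symm).symm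
      exact h' hu hv
    · exact fun h => ⟨h.ne, fun _ _ => h⟩
  · simp only [hk]
    ext u v
    constructor
    · exact fun h => h.1
    · exact fun h => ⟨h, fun _ _ h' => h (congrArg Subtype.val h')⟩
end

section
/- For all n ≥ 2 and m ≥ 1, there is a Marcello step from the disjoint union K_n ⊔ K_m of two complete graphs to the complete graph on its n + m vertices; since K_n ⊔ K_m is not complete, ϖ(K_n ∪ K_m) = 1. -/
open SimpleGraph

attribute [local instance] Classical.propDecidable

theorem mdeg_inl (n m : ℕ) (i : Fin n) :
    mdeg ((⊤ : SimpleGraph (Fin n)) ⊕g (⊤ : SimpleGraph (Fin m))) (Sum.inl i) = n - 1 := by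
  have : ((⊤ : SimpleGraph (Fin n)) ⊕g (⊤ : SimpleGraph (Fin m))).neighborSet (Sum.inl i)
      = Sum.inl '' ({i}ᶜ : Set (Fin n)) := by
    ext x
    rcases x with x | x <;> simp [eq_comm]
  rw [mdeg, this, Set.ncard_image_of_injective _ Sum.inl_injective, Set.ncard_compl]
  simp

theorem mdeg_inr (n m : ℕ) (i : Fin m) :
    mdeg ((⊤ : SimpleGraph (Fin n)) ⊕g (⊤ : SimpleGraph (Fin m))) (Sum.inr i) = m - 1 := by
  have : ((⊤ : SimpleGraph (Fin n)) ⊕g (⊤ : SimpleGraph (Fin m))).neighborSet (Sum.inr i)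
      = Sum.inr '' ({i}ᶜ : Set (Fin m)) := by
    ext x
    rcases x with x | x <;> simp [eq_comm]
  rw [mdeg, this, Set.ncard_image_of_injective _ Sum.inr_injective, Set.ncard_compl]
  simp

theorem step_of_assign (n m : ℕ) (hn : 2 ≤ n) (hm : 1 ≤ m) (g : Fin n → Fin m → Prop)
    (h1 : ∀ i, {j | g i j}.ncard ≤ n - 1) (h2 : ∀ j, {i | ¬ g i j}.ncard ≤ m - 1) :
    MarcelloStep ((⊤ : SimpleGraph (Fin n)) ⊕g (⊤ : SimpleGraph (Fin m)))
        (⊤ : SimpleGraph (Fin n ⊕ Fin m)) := by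
  have hf : ∀ e : Sym2 (Fin n ⊕ Fin m), ∃ v : Fin n ⊕ Fin m,
      ∀ i j, e = s(Sum.inl i, Sum.inr j) → v = if g i j then Sum.inl i else Sum.inr j := by
    intro e
    by_cases h : ∃ i j, e = s(Sum.inl i, Sum.inr j)
    · obtain ⟨i, j, rfl⟩ := h
      refine ⟨if g i j then Sum.inl i else Sum.inr j, ?_⟩
      intro i' j' h
      simp at h
      obtain ⟨rfl, rfl⟩ := h
      rfl
    · exact ⟨Sum.inl ⟨0, by omega⟩, fun i j hh => absurd ⟨i, j, hh⟩ h⟩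
  choose f hf using hf
  have hE : ∀ e ∈ (⊤ : SimpleGraph (Fin n ⊕ Fin m)).edgeSet \
      ((⊤ : SimpleGraph (Fin n)) ⊕g (⊤ : SimpleGraph (Fin m))).edgeSet,
      ∃ i j, e = s(Sum.inl i, Sum.inr j) := by
    intro e
    induction e using Sym2.ind with
    | _ x y =>
      rcases x with x | x <;> rcases y with y | y
      · simp
      · intro _
        exact ⟨x, y, rfl⟩
      · intro _
        exact ⟨y, x, Sym2.eq_swap⟩
      · simp
  have h3 : ∀ v, (((⊤ : SimpleGraph (Fin n ⊕ Fin m)).edgeSet \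
      ((⊤ : SimpleGraph (Fin n)) ⊕g (⊤ : SimpleGraph (Fin m))).edgeSet) ∩ {e | f e = v}).ncard
      ≤ mdeg ((⊤ : SimpleGraph (Fin n)) ⊕g (⊤ : SimpleGraph (Fin m))) v := by
    rintro (a | a)
    · rw [mdeg_inl]
      refine le_trans ?_ (h1 a)
      refine le_trans (Set.ncard_le_ncard (t := (fun j => s(Sum.inl a, Sum.inr j)) '' {j | g a j})
        ?_ (Set.toFinite _)) (Set.ncard_image_le (Set.toFinite _))
      rintro e ⟨he, hv⟩
      obtain ⟨i, j, rfl⟩ := hE e he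
      have := hf _ i j rfl
      rw [Set.mem_setOf_eq] at hv
      rw [hv] at this
      split_ifs at this with hg
      · cases this
        exact ⟨j, hg, rfl⟩
    · rw [mdeg_inr]
      refine le_trans ?_ (h2 a)
      refine le_trans (Set.ncard_le_ncard (t := (fun i => s(Sum.inl i, Sum.inr a)) '' {i | ¬ g i a})
        ?_ (Set.toFinite _)) (Set.ncard_image_le (Set.toFinite _))
      rintro e ⟨he, hv⟩
      obtain ⟨i, j, rfl⟩ := hE e he
      have := hf _ i j rfl
      rw [Set.mem_setOf_eq] at hv
      rw [hv] at this
      split_ifs at this with hg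
      · cases this
        exact ⟨i, hg, rfl⟩
  refine ⟨le_top, f, ?_, ?_, h3⟩
  · intro e he
    obtain ⟨i, j, rfl⟩ := hE e he
    rw [hf _ i j rfl]
    split_ifs <;> simp
  · rintro v ⟨e, he, hv⟩
    constructor
    · refine lt_of_lt_of_le ?_ (h3 v)
      rw [Set.ncard_pos (Set.toFinite _)]
      exact ⟨e, he, hv⟩
    · rcases v with v | v
      · rw [mdeg_inl]; simp; omega
      · rw [mdeg_inr]; simp; omega

theorem step_main (n m : ℕ) (hn : 2 ≤ n) (hm : 1 ≤ m) :
    MarcelloStep ((⊤ : SimpleGraph (Fin n)) ⊕g (⊤ : SimpleGraph (Fin m)))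
        (⊤ : SimpleGraph (Fin n ⊕ Fin m)) := by
  rcases lt_trichotomy m n with h | h | h
  · refine step_of_assign n m hn hm (fun _ _ => True) ?_ ?_
    · intro i
      simp [Set.ncard_univ]; omega
    · simp
  · subst h
    refine step_of_assign m m hn hm (fun i j => j ≠ i) ?_ ?_
    · intro i
      have : {j | j ≠ i} = ({i}ᶜ : Set (Fin m)) := rfl
      rw [this, Set.ncard_compl]
      simp
    · intro j
      simp; omega
  · refine step_of_assign n m hn hm (fun _ _ => False) ?_ ?_
    · simp
    · intro i
      simp [Set.ncard_univ]; omega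

/-- For `n ≥ 2`, `m ≥ 1`, one Marcello step completes `K_n ⊔ K_m`, and `ϖ(K_n ∪ K_m) = 1`. -/
theorem marcello_completeSum (n m : ℕ) (hn : 2 ≤ n) (hm : 1 ≤ m) :
    MarcelloStep ((⊤ : SimpleGraph (Fin n)) ⊕g (⊤ : SimpleGraph (Fin m)))
        (⊤ : SimpleGraph (Fin n ⊕ Fin m)) ∧
      marcelloNumber ((⊤ : SimpleGraph (Fin n)) ⊕g (⊤ : SimpleGraph (Fin m))) = 1 := by
  have hs := step_main n m hn hm
  refine ⟨hs, ?_⟩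
  have h1 : MarcelloChain ((⊤ : SimpleGraph (Fin n)) ⊕g (⊤ : SimpleGraph (Fin m))) ⊤ 1 := by
    refine ⟨fun i => if i = 0 then _ else ⊤, if_pos rfl, by simp, ?_⟩
    intro i hi
    obtain rfl : i = 0 := by omega
    simpa using hs
  have h0 : ¬ MarcelloChain ((⊤ : SimpleGraph (Fin n)) ⊕g (⊤ : SimpleGraph (Fin m))) ⊤ 0 := by
    rintro ⟨c, hc, hc', -⟩
    rw [hc] at hc'
    have : ((⊤ : SimpleGraph (Fin n)) ⊕g (⊤ : SimpleGraph (Fin m))).Adj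
        (Sum.inl ⟨0, by omega⟩) (Sum.inr ⟨0, by omega⟩) := by
      rw [hc']; simp
    simp at this
  have hle : marcelloNumber ((⊤ : SimpleGraph (Fin n)) ⊕g (⊤ : SimpleGraph (Fin m))) ≤ 1 :=
    Nat.sInf_le h1
  have hmem : MarcelloChain ((⊤ : SimpleGraph (Fin n)) ⊕g (⊤ : SimpleGraph (Fin m))) ⊤
      (marcelloNumber ((⊤ : SimpleGraph (Fin n)) ⊕g (⊤ : SimpleGraph (Fin m)))) :=
    Nat.sInf_mem (s := {k | MarcelloChain _ _ k}) ⟨1, h1⟩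
  rcases Nat.le_one_iff_eq_zero_or_eq_one.mp hle with h | h
  · rw [h] at hmem
    exact absurd hmem h0
  · exact h
end

section
/- Let G be a simple graph on n ≥ 2 vertices with at least one edge and let H be a simple graph on m ≥ 1 vertices. If there is a Marcello chain of length a from G to the complete graph on its vertex set and a Marcello chain of length b from H to the complete graph on its vertex set, then there is a Marcello chain of length at most max(a, b) + 1 from the disjoint union G ⊔ H to the complete graph on its n + m vertices; hence ϖ(G ∪ H) ≤ max{ϖ(G) + 1, ϖ(H) + 1}. -/
open SimpleGraph

attribute [local instance] Classical.propDecidable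

/-- Relational form of a step. -/
def RStep {V : Type*} [Fintype V] (G G' : SimpleGraph V) (N : ℕ) : Prop :=
  G ≤ G' ∧ ∃ R : V → V → Prop,
    (∀ u v, G'.Adj u v → ¬ G.Adj u v → R u v ∨ R v u) ∧
    (∀ v w, G'.Adj v w → ¬ G.Adj v w → R v w → mdeg G v < N - 1) ∧
    (∀ v, {w | G'.Adj v w ∧ ¬ G.Adj v w ∧ R v w}.ncard ≤ mdeg G v)

theorem RStep.refl {V : Type*} [Fintype V] (G : SimpleGraph V) (N : ℕ) : RStep G G N := by
  refine ⟨le_rfl, fun _ _ => False, ?_, ?_, ?_⟩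
  · intro u v h h'
    exact absurd h h'
  · intro v w h h'
    exact absurd h h'
  · intro v
    simp

theorem RStep.of_step {V : Type*} [Fintype V] {G G' : SimpleGraph V} (h : MarcelloStep G G') :
    RStep G G' (Fintype.card V) := by
  obtain ⟨hle, f, h1, h2, h3⟩ := h
  refine ⟨hle, fun v w => f s(v, w) = v, ?_, ?_, ?_⟩
  · intro u v h h'
    have := h1 s(u, v) ⟨h, h'⟩
    rcases Sym2.mem_iff.1 this with h | h
    · exact Or.inl h
    · right
      show f s(v, u) = v
      rw [Sym2.eq_swap]
      exact h
  · intro v w h h' hf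
    exact (h2 v ⟨s(v, w), ⟨h, h'⟩, hf⟩).2
  · intro v
    refine le_trans ?_ (h3 v)
    refine Set.ncard_le_ncard_of_injOn (fun w => s(v, w)) ?_ ?_ (Set.toFinite _)
    · rintro w ⟨h, h', hf⟩
      exact ⟨⟨h, h'⟩, hf⟩
    · intro w _ w' _ h
      exact Sym2.congr_right.1 h

theorem RStep.to_step {V : Type*} [Fintype V] {G G' : SimpleGraph V}
    (h : RStep G G' (Fintype.card V)) : MarcelloStep G G' := by
  obtain ⟨hle, R, h1, h2, h3⟩ := h
  have key : ∀ e : Sym2 V, ∃ v, e ∈ G'.edgeSet \ G.edgeSet → ∃ w, e = s(v, w) ∧ R v w := by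
    intro e
    induction e using Sym2.ind with
    | _ u v =>
      by_cases he : s(u, v) ∈ G'.edgeSet \ G.edgeSet
      · rcases h1 u v he.1 he.2 with h | h
        · exact ⟨u, fun _ => ⟨v, rfl, h⟩⟩
        · exact ⟨v, fun _ => ⟨u, Sym2.eq_swap, h⟩⟩
      · exact ⟨u, fun h => absurd h he⟩
  choose f hf using key
  have hcard : ∀ v : V, ((G'.edgeSet \ G.edgeSet) ∩ {e | f e = v}).ncard ≤ mdeg G v := by
    intro v
    refine le_trans ?_ (h3 v)
    rw [← Set.ncard_image_of_injective (f := fun w => s(v, w)) {w | G'.Adj v w ∧ ¬ G.Adj v w ∧ R v w}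
      (fun w w' h => Sym2.congr_right.1 h)]
    refine Set.ncard_le_ncard ?_ (Set.toFinite _)
    rintro e ⟨he, rfl⟩
    obtain ⟨w, hw, hR⟩ := hf e he
    refine ⟨w, ⟨?_, ?_, hR⟩, hw.symm⟩
    · have := he.1
      rw [hw] at this
      exact this
    · have := he.2
      rw [hw] at this
      exact this
  refine ⟨hle, f, ?_, ?_, hcard⟩
  · intro e he
    obtain ⟨w, hw, -⟩ := hf e he
    have : f e ∈ s(f e, w) := Sym2.mem_mk_left _ _
    rwa [← hw] at this
  · rintro v ⟨e, he, rfl⟩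
    constructor
    · refine lt_of_lt_of_le ?_ (hcard (f e))
      rw [Set.ncard_pos (Set.toFinite _)]
      exact ⟨e, he, rfl⟩
    · obtain ⟨w, hw, hR⟩ := hf e he
      have h := he
      rw [hw] at h
      exact h2 (f e) w h.1 h.2 hR

theorem mdeg_inl_s6 {α β : Type*} (G : SimpleGraph α) (H : SimpleGraph β) (v : α) :
    mdeg (G ⊕g H) (Sum.inl v) = mdeg G v := by
  unfold mdeg
  rw [← Set.ncard_image_of_injective (G.neighborSet v) (Sum.inl_injective (β := β))]
  congr 1
  ext x
  rcases x with x | x <;> simp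

theorem mdeg_inr_s6 {α β : Type*} (G : SimpleGraph α) (H : SimpleGraph β) (v : β) :
    mdeg (G ⊕g H) (Sum.inr v) = mdeg H v := by
  unfold mdeg
  rw [← Set.ncard_image_of_injective (H.neighborSet v) (Sum.inr_injective (α := α))]
  congr 1
  ext x
  rcases x with x | x <;> simp

theorem mdeg_top {V : Type*} [Fintype V] (v : V) :
    mdeg (⊤ : SimpleGraph V) v = Fintype.card V - 1 := by
  unfold mdeg
  have : (⊤ : SimpleGraph V).neighborSet v = {v}ᶜ := by
    ext w
    simp [eq_comm]
  rw [this, Set.ncard_compl, Set.ncard_singleton, Nat.card_eq_fintype_card]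

theorem RStep.sum {α β : Type*} [Fintype α] [Fintype β] {G G' : SimpleGraph α}
    {H H' : SimpleGraph β} (hG : RStep G G' (Fintype.card α)) (hH : RStep H H' (Fintype.card β)) :
    RStep (G ⊕g H) (G' ⊕g H') (Fintype.card (α ⊕ β)) := by
  obtain ⟨hle, R, h1, h2, h3⟩ := hG
  obtain ⟨kle, S, k1, k2, k3⟩ := hH
  have hc := Fintype.card_sum (α := α) (β := β)
  refine ⟨?_, Sum.elim (fun v => Sum.elim (R v) (fun _ => False))
    (fun v => Sum.elim (fun _ => False) (S v)), ?_, ?_, ?_⟩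
  · rintro (u | u) (v | v) h
    · exact hle (by simpa using h)
    · simp at h
    · simp at h
    · exact kle (by simpa using h)
  · rintro (u | u) (v | v) h h'
    · exact h1 u v (by simpa using h) (by simpa using h')
    · simp at h
    · simp at h
    · exact k1 u v (by simpa using h) (by simpa using h')
  · rintro (u | u) (v | v) h h' hr
    · rw [mdeg_inl_s6]
      have := h2 u v (by simpa using h) (by simpa using h') hr
      omega
    · simp at h
    · simp at h
    · rw [mdeg_inr_s6]
      have := k2 u v (by simpa using h) (by simpa using h') hr
      omega
  · rintro (v | v)
    · rw [mdeg_inl_s6]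
      refine le_trans (le_of_eq ?_) (h3 v)
      rw [← Set.ncard_image_of_injective {w | G'.Adj v w ∧ ¬ G.Adj v w ∧ R v w}
        (Sum.inl_injective (β := β))]
      congr 1
      ext x
      rcases x with x | x <;> simp
    · rw [mdeg_inr_s6]
      refine le_trans (le_of_eq ?_) (k3 v)
      rw [← Set.ncard_image_of_injective {w | H'.Adj v w ∧ ¬ H.Adj v w ∧ S v w}
        (Sum.inr_injective (α := α))]
      congr 1
      ext x
      rcases x with x | x <;> simp

theorem exists_rel {α β : Type*} [Fintype α] [Fintype β] (hn : 2 ≤ Fintype.card α) :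
    ∃ R : α → β → Prop, (∀ a, {b | R a b}.ncard ≤ Fintype.card α - 1) ∧
      (∀ b, {a | ¬ R a b}.ncard ≤ Fintype.card β - 1) := by
  rcases lt_trichotomy (Fintype.card α) (Fintype.card β) with h | h | h
  · refine ⟨fun _ _ => False, by simp, fun b => ?_⟩
    simp [Set.ncard_univ]
    omega
  · have e := Fintype.equivOfCardEq h
    refine ⟨fun a b => b ≠ e a, fun a => ?_, fun b => ?_⟩
    · have : {b | b ≠ e a} = {e a}ᶜ := by
        ext
        simp
      rw [this, Set.ncard_compl, Set.ncard_singleton, Nat.card_eq_fintype_card, h]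
    · have : {a | ¬ b ≠ e a} = {e.symm b} := by
        ext x
        simp [Equiv.eq_symm_apply, eq_comm]
      rw [this, Set.ncard_singleton]
      omega
  · refine ⟨fun _ _ => True, fun a => ?_, by simp⟩
    simp [Set.ncard_univ]
    omega

theorem RStep.top {α β : Type*} [Fintype α] [Fintype β]
    (hn : 2 ≤ Fintype.card α) (hm : 1 ≤ Fintype.card β) :
    RStep ((⊤ : SimpleGraph α) ⊕g (⊤ : SimpleGraph β)) ⊤ (Fintype.card (α ⊕ β)) := by
  obtain ⟨R, h1, h2⟩ := exists_rel (α := α) (β := β) hn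
  have hc := Fintype.card_sum (α := α) (β := β)
  refine ⟨le_top, Sum.elim (fun v => Sum.elim (fun _ => False) (R v))
    (fun v => Sum.elim (fun a => ¬ R a v) (fun _ => False)), ?_, ?_, ?_⟩
  · rintro (u | u) (v | v) h h'
    · simp at h h'
      exact absurd h' h
    · exact em _
    · exact (em _).symm
    · simp at h h'
      exact absurd h' h
  · rintro (u | u) w - - -
    · rw [mdeg_inl_s6, mdeg_top]
      omega
    · rw [mdeg_inr_s6, mdeg_top]
      omega
  · rintro (v | v)
    · rw [mdeg_inl_s6, mdeg_top]
      refine le_trans (le_of_eq ?_) (h1 v)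
      rw [← Set.ncard_image_of_injective {b | R v b} (Sum.inr_injective (α := α))]
      congr 1
      ext x
      rcases x with x | x <;> simp
    · rw [mdeg_inr_s6, mdeg_top]
      refine le_trans (le_of_eq ?_) (h2 v)
      rw [← Set.ncard_image_of_injective {a | ¬ R a v} (Sum.inl_injective (β := β))]
      congr 1
      ext x
      rcases x with x | x <;> simp

theorem RStep.pad {V : Type*} [Fintype V] {c : ℕ → SimpleGraph V} {k : ℕ}
    (h : ∀ i < k, MarcelloStep (c i) (c (i + 1))) (i : ℕ) :
    RStep (c (min i k)) (c (min (i + 1) k)) (Fintype.card V) := by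
  by_cases hi : i < k
  · rw [min_eq_left hi.le, min_eq_left (by omega : i + 1 ≤ k)]
    exact RStep.of_step (h i hi)
  · rw [min_eq_right (by omega : k ≤ i), min_eq_right (by omega : k ≤ i + 1)]
    exact RStep.refl _ _

/-- `ϖ(G ∪ H) ≤ max{ϖ(G)+1, ϖ(H)+1}` for `G` with an edge on `n ≥ 2` vertices and `H`
on `m ≥ 1` vertices. -/
theorem marcello_disjUnion_le {α β : Type*} [Fintype α] [Fintype β]
    (G : SimpleGraph α) (H : SimpleGraph β)
    (hn : 2 ≤ Fintype.card α) (hm : 1 ≤ Fintype.card β) (hE : G.edgeSet.Nonempty)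
    (a b : ℕ) (hGa : MarcelloChain G (⊤ : SimpleGraph α) a)
    (hHb : MarcelloChain H (⊤ : SimpleGraph β) b) :
    ∃ k ≤ max a b + 1, MarcelloChain (G ⊕g H) (⊤ : SimpleGraph (α ⊕ β)) k := by
  obtain ⟨c, c0, ca, hc⟩ := hGa
  obtain ⟨d, d0, db, hd⟩ := hHb
  refine ⟨max a b + 1, le_rfl, fun i => if i ≤ max a b then
    (c (min i a)) ⊕g (d (min i b)) else ⊤, ?_, ?_, ?_⟩
  · simp [c0, d0]
  · simp
  · intro i hi
    apply RStep.to_step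
    have hi' : i ≤ max a b := by omega
    by_cases h : i + 1 ≤ max a b
    · simp only [hi', h, if_true]
      exact RStep.sum (RStep.pad hc i) (RStep.pad hd i)
    · have hi2 : i = max a b := by omega
      simp only [hi', h, if_true, if_false]
      rw [min_eq_right (by omega : a ≤ i), min_eq_right (by omega : b ≤ i), ca, db]
      exact RStep.top hn hm
end

section
/- Let G be a simple graph on n vertices and H a simple graph on m vertices. If there is a Marcello chain of length a from G to the complete graph on its vertex set and a Marcello chain of length b from H to the complete graph on its vertex set, then there is a Marcello chain of length at most max(a, b) from the join G + H to the complete graph on its n + m vertices; hence ϖ(G + H) ≤ max{ϖ(G), ϖ(H)}. -/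
open SimpleGraph

attribute [local instance] Classical.propDecidable

/-- The join of two graphs. -/
def graphJoin {α β : Type*} (G : SimpleGraph α) (H : SimpleGraph β) :
    SimpleGraph (α ⊕ β) :=
  (G ⊕g H) ⊔ completeBipartiteGraph α β

theorem mj_adj {α β : Type*} (G : SimpleGraph α) (H : SimpleGraph β) :
    (∀ x y, (graphJoin G H).Adj (Sum.inl x) (Sum.inl y) ↔ G.Adj x y) ∧
    (∀ x y, (graphJoin G H).Adj (Sum.inr x) (Sum.inr y) ↔ H.Adj x y) ∧
    (∀ x y, (graphJoin G H).Adj (Sum.inl x) (Sum.inr y)) ∧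
    (∀ x y, (graphJoin G H).Adj (Sum.inr x) (Sum.inl y)) := by
  simp [graphJoin]

theorem mj_top {α β : Type*} :
    graphJoin (⊤ : SimpleGraph α) (⊤ : SimpleGraph β) = ⊤ := by
  ext x y
  rcases x with x | x <;> rcases y with y | y <;> simp [graphJoin]

theorem mj_degl {α β : Type*} [Fintype α] [Fintype β] (G : SimpleGraph α) (H : SimpleGraph β)
    (v : α) : mdeg (graphJoin G H) (Sum.inl v) = mdeg G v + Fintype.card β := by
  have h : (graphJoin G H).neighborSet (Sum.inl v) =
      Sum.inl '' G.neighborSet v ∪ Sum.inr '' Set.univ := by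
    ext x
    rcases x with x | x <;> simp [graphJoin]
  unfold mdeg
  rw [h, Set.ncard_union_eq _ (Set.toFinite _) (Set.toFinite _),
    Set.ncard_image_of_injective _ Sum.inl_injective,
    Set.ncard_image_of_injective _ Sum.inr_injective, Set.ncard_univ, Nat.card_eq_fintype_card]
  rw [Set.disjoint_left]
  rintro _ ⟨x, _, rfl⟩ ⟨y, _, h⟩
  cases h

theorem mj_degr {α β : Type*} [Fintype α] [Fintype β] (G : SimpleGraph α) (H : SimpleGraph β)
    (v : β) : mdeg (graphJoin G H) (Sum.inr v) = mdeg H v + Fintype.card α := by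
  have h : (graphJoin G H).neighborSet (Sum.inr v) =
      Sum.inr '' H.neighborSet v ∪ Sum.inl '' Set.univ := by
    ext x
    rcases x with x | x <;> simp [graphJoin]
  unfold mdeg
  rw [h, Set.ncard_union_eq _ (Set.toFinite _) (Set.toFinite _),
    Set.ncard_image_of_injective _ Sum.inl_injective,
    Set.ncard_image_of_injective _ Sum.inr_injective, Set.ncard_univ, Nat.card_eq_fintype_card]
  rw [Set.disjoint_left]
  rintro _ ⟨x, _, rfl⟩ ⟨y, _, h⟩
  cases h

theorem mj_refl {V : Type*} [Fintype V] (G : SimpleGraph V) : MarcelloStep G G := by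
  refine ⟨le_rfl, fun e => e.out.1, ?_, ?_, ?_⟩ <;> simp

theorem mj_new {α β : Type*} (G G' : SimpleGraph α) (H H' : SimpleGraph β)
    (e : Sym2 (α ⊕ β)) (he : e ∈ (graphJoin G' H').edgeSet \ (graphJoin G H).edgeSet) :
    (∃ e1 ∈ G'.edgeSet \ G.edgeSet, e = Sym2.map Sum.inl e1) ∨
    (∃ e2 ∈ H'.edgeSet \ H.edgeSet, e = Sym2.map Sum.inr e2) := by
  induction e using Sym2.ind with
  | _ x y =>
    rcases x with x | x <;> rcases y with y | y
    · left
      refine ⟨s(x, y), ?_, by simp⟩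
      simpa [graphJoin] using he
    · simp [graphJoin] at he
    · simp [graphJoin] at he
    · right
      refine ⟨s(x, y), ?_, by simp⟩
      simpa [graphJoin] using he

theorem mj_step {α β : Type*} [Fintype α] [Fintype β] (G G' : SimpleGraph α)
    (H H' : SimpleGraph β) (hG : MarcelloStep G G') (hH : MarcelloStep H H') :
    MarcelloStep (graphJoin G H) (graphJoin G' H') := by
  obtain ⟨hGle, f, f1, f2, f3⟩ := hG
  obtain ⟨hHle, g, g1, g2, g3⟩ := hH
  have key : ∀ e : Sym2 (α ⊕ β), ∃ w : α ⊕ β,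
      e ∈ (graphJoin G' H').edgeSet \ (graphJoin G H).edgeSet →
      (∃ e1 ∈ G'.edgeSet \ G.edgeSet, e = Sym2.map Sum.inl e1 ∧ w = Sum.inl (f e1)) ∨
      (∃ e2 ∈ H'.edgeSet \ H.edgeSet, e = Sym2.map Sum.inr e2 ∧ w = Sum.inr (g e2)) := by
    intro e
    by_cases he : e ∈ (graphJoin G' H').edgeSet \ (graphJoin G H).edgeSet
    · rcases mj_new G G' H H' e he with ⟨e1, h1, h2⟩ | ⟨e1, h1, h2⟩
      · exact ⟨Sum.inl (f e1), fun _ => Or.inl ⟨e1, h1, h2, rfl⟩⟩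
      · exact ⟨Sum.inr (g e1), fun _ => Or.inr ⟨e1, h1, h2, rfl⟩⟩
    · exact ⟨e.out.1, fun h => absurd h he⟩
  choose F hF using key
  refine ⟨?_, F, ?_, ?_, ?_⟩
  · intro x y h
    rcases x with x | x <;> rcases y with y | y <;> simp [graphJoin] at h ⊢
    · exact hGle h
    · exact hHle h
  · intro e he
    rcases hF e he with ⟨e1, h1, h2, h3⟩ | ⟨e1, h1, h2, h3⟩
    · rw [h3, h2, Sym2.mem_map]
      exact ⟨_, f1 e1 h1, rfl⟩
    · rw [h3, h2, Sym2.mem_map]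
      exact ⟨_, g1 e1 h1, rfl⟩
  · rintro v ⟨e, he, rfl⟩
    rcases hF e he with ⟨e1, h1, h2, h3⟩ | ⟨e1, h1, h2, h3⟩
    · rw [h3, mj_degl, Fintype.card_sum]
      have := f2 (f e1) ⟨e1, h1, rfl⟩
      omega
    · rw [h3, mj_degr, Fintype.card_sum]
      have := g2 (g e1) ⟨e1, h1, rfl⟩
      omega
  · rintro (v | v)
    · rw [mj_degl]
      refine le_trans ?_ (le_trans (f3 v) (Nat.le_add_right _ _))
      refine le_trans (Set.ncard_le_ncard (t := Sym2.map Sum.inl ''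
        ((G'.edgeSet \ G.edgeSet) ∩ {e | f e = v})) ?_ (Set.toFinite _))
        (Set.ncard_image_le (Set.toFinite _))
      rintro e ⟨he, hv⟩
      simp only [Set.mem_setOf_eq] at hv
      rcases hF e he with ⟨e1, h1, h2, h3⟩ | ⟨e1, h1, h2, h3⟩
      · rw [hv] at h3
        exact ⟨e1, ⟨h1, (Sum.inl_injective h3).symm⟩, h2.symm⟩
      · rw [hv] at h3
        cases h3
    · rw [mj_degr]
      refine le_trans ?_ (le_trans (g3 v) (Nat.le_add_right _ _))
      refine le_trans (Set.ncard_le_ncard (t := Sym2.map Sum.inr ''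
        ((H'.edgeSet \ H.edgeSet) ∩ {e | g e = v})) ?_ (Set.toFinite _))
        (Set.ncard_image_le (Set.toFinite _))
      rintro e ⟨he, hv⟩
      simp only [Set.mem_setOf_eq] at hv
      rcases hF e he with ⟨e1, h1, h2, h3⟩ | ⟨e1, h1, h2, h3⟩
      · rw [hv] at h3
        cases h3
      · rw [hv] at h3
        exact ⟨e1, ⟨h1, (Sum.inr_injective h3).symm⟩, h2.symm⟩

theorem mj_pad {V : Type*} [Fintype V] (c : ℕ → SimpleGraph V) (a : ℕ)
    (h : ∀ i < a, MarcelloStep (c i) (c (i + 1))) (i : ℕ) :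
    MarcelloStep (c (min i a)) (c (min (i + 1) a)) := by
  rcases lt_or_ge i a with hi | hi
  · rw [min_eq_left hi.le, min_eq_left (Nat.succ_le_of_lt hi)]
    exact h i hi
  · rw [min_eq_right hi, min_eq_right (by omega)]
    exact mj_refl _

/-- `ϖ(G + H) ≤ max{ϖ(G), ϖ(H)}`. -/
theorem marcello_join_le {α β : Type*} [Fintype α] [Fintype β]
    (G : SimpleGraph α) (H : SimpleGraph β) (a b : ℕ)
    (hGa : MarcelloChain G (⊤ : SimpleGraph α) a)
    (hHb : MarcelloChain H (⊤ : SimpleGraph β) b) :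
    ∃ k ≤ max a b, MarcelloChain (graphJoin G H) (⊤ : SimpleGraph (α ⊕ β)) k := by
  obtain ⟨c, c0, ca, hc⟩ := hGa
  obtain ⟨d, d0, db, hd⟩ := hHb
  refine ⟨max a b, le_rfl, fun i => graphJoin (c (min i a)) (d (min i b)), ?_, ?_, ?_⟩
  · simp [c0, d0]
  · simp only [min_eq_right (le_max_left a b), min_eq_right (le_max_right a b), ca, db]
    exact mj_top
  · intro i _
    exact mj_step _ _ _ _ (mj_pad c a hc i) (mj_pad d b hd i)
end

section
/- For every m ≥ 2 there exists n ≥ 1 such that there is a Marcello step from the join K_n + N_m (the complete graph on n vertices joined to m pairwise non-adjacent vertices) to the complete graph on its n + m vertices; i.e., there exists n ≥ 1 with ϖ(K_n + N_m) = 1. -/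
open SimpleGraph

attribute [local instance] Classical.propDecidable

theorem gj_new {n m : ℕ} (e : Sym2 (Fin n ⊕ Fin m))
    (he : e ∈ (⊤ : SimpleGraph (Fin n ⊕ Fin m)).edgeSet \
      (graphJoin (⊤ : SimpleGraph (Fin n)) (⊥ : SimpleGraph (Fin m))).edgeSet) :
    ∃ a b : Fin m, a ≠ b ∧ e = s(Sum.inr a, Sum.inr b) := by
  induction e using Sym2.ind with
  | _ x y =>
    obtain ⟨h1, h2⟩ := he
    rw [SimpleGraph.mem_edgeSet] at h1 h2
    rcases x with x | x <;> rcases y with y | y <;> simp [graphJoin] at h1 h2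
    · exact absurd h2 h1
    · exact ⟨x, y, h1, rfl⟩

theorem gj_deg {n m : ℕ} (j : Fin m) :
    mdeg (graphJoin (⊤ : SimpleGraph (Fin n)) (⊥ : SimpleGraph (Fin m))) (Sum.inr j) = n := by
  have : (graphJoin (⊤ : SimpleGraph (Fin n)) (⊥ : SimpleGraph (Fin m))).neighborSet (Sum.inr j)
      = Set.range (Sum.inl : Fin n → Fin n ⊕ Fin m) := by
    ext x
    rcases x with x | x <;> simp [graphJoin]
  rw [mdeg, this, ← Set.image_univ, Set.ncard_image_of_injective _ Sum.inl_injective,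
    Set.ncard_univ, Nat.card_fin]

theorem gj_step (m : ℕ) (hm : 2 ≤ m) :
    MarcelloStep (graphJoin (⊤ : SimpleGraph (Fin m)) (⊥ : SimpleGraph (Fin m)))
        (⊤ : SimpleGraph (Fin m ⊕ Fin m)) := by
  have hf : ∀ e : Sym2 (Fin m ⊕ Fin m), (Quot.out e).1 ∈ e := fun e => Sym2.out_fst_mem e
  have key : ∀ e ∈ (⊤ : SimpleGraph (Fin m ⊕ Fin m)).edgeSet \
      (graphJoin (⊤ : SimpleGraph (Fin m)) (⊥ : SimpleGraph (Fin m))).edgeSet,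
      ∃ a b : Fin m, (Quot.out e).1 = Sum.inr a ∧ e = s(Sum.inr a, Sum.inr b) := by
    intro e he
    obtain ⟨a, b, hab, h⟩ := gj_new e he
    have h' := hf e
    generalize (Quot.out e).1 = w at h'
    subst h
    rcases Sym2.mem_iff.1 h' with h' | h'
    · exact ⟨a, b, h', rfl⟩
    · exact ⟨b, a, h', Sym2.eq_swap⟩
  refine ⟨le_top, fun e => (Quot.out e).1, fun e _ => hf e, ?_, ?_⟩
  · rintro v ⟨e, he, rfl⟩
    obtain ⟨a, b, h, -⟩ := key e he
    simp only [h]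
    rw [gj_deg]
    simp only [Fintype.card_sum, Fintype.card_fin]
    omega
  · rintro (i | j)
    · convert Nat.zero_le _
      rw [Set.ncard_eq_zero (Set.toFinite _), Set.eq_empty_iff_forall_notMem]
      rintro e ⟨he, h⟩
      obtain ⟨a, b, h', -⟩ := key e he
      simp [h'] at h
    · rw [gj_deg]
      have hsub : (((⊤ : SimpleGraph (Fin m ⊕ Fin m)).edgeSet \
        (graphJoin (⊤ : SimpleGraph (Fin m)) (⊥ : SimpleGraph (Fin m))).edgeSet) ∩
          {e | (Quot.out e).1 = Sum.inr j}) ⊆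
          (fun b : Fin m => (s(Sum.inr j, Sum.inr b) : Sym2 (Fin m ⊕ Fin m))) '' Set.univ := by
        rintro e ⟨he, h⟩
        obtain ⟨a, b, h', h''⟩ := key e he
        have : a = j := Sum.inr_injective (h'.symm.trans h)
        subst this
        exact ⟨b, trivial, h''.symm⟩
      refine (Set.ncard_le_ncard hsub (Set.toFinite _)).trans
        ((Set.ncard_image_le (Set.toFinite _)).trans ?_)
      rw [Set.ncard_univ, Nat.card_fin]

/-- For every `m ≥ 2` there exists `n ≥ 1` such that one Marcello step completes
`K_n + N_m`, i.e. `ϖ(K_n + N_m) = 1`. -/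
theorem exists_marcello_join_complete_null (m : ℕ) (hm : 2 ≤ m) :
    ∃ n : ℕ, 1 ≤ n ∧
      MarcelloStep (graphJoin (⊤ : SimpleGraph (Fin n)) (⊥ : SimpleGraph (Fin m)))
        (⊤ : SimpleGraph (Fin n ⊕ Fin m)) ∧
      marcelloNumber (graphJoin (⊤ : SimpleGraph (Fin n)) (⊥ : SimpleGraph (Fin m))) = 1 := by
  refine ⟨m, by omega, gj_step m hm, ?_⟩
  have h1 : MarcelloChain (graphJoin (⊤ : SimpleGraph (Fin m)) (⊥ : SimpleGraph (Fin m))) ⊤ 1 := by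
    refine ⟨fun i => if i = 0 then graphJoin ⊤ ⊥ else ⊤, by simp, by simp, ?_⟩
    intro i hi
    obtain rfl : i = 0 := by omega
    simpa using gj_step m hm
  have h0 : ¬ MarcelloChain
      (graphJoin (⊤ : SimpleGraph (Fin m)) (⊥ : SimpleGraph (Fin m))) ⊤ 0 := by
    rintro ⟨c, hc, hc', -⟩
    have h := hc.symm.trans hc'
    have h2 : (graphJoin (⊤ : SimpleGraph (Fin m)) (⊥ : SimpleGraph (Fin m))).Adj
        (Sum.inr ⟨0, by omega⟩) (Sum.inr ⟨1, by omega⟩) := by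
      rw [h]; simp
    simp [graphJoin] at h2
  refine le_antisymm (Nat.sInf_le h1) ?_
  refine le_csInf ⟨1, h1⟩ ?_
  intro k hk
  rcases Nat.eq_zero_or_pos k with rfl | hk'
  · exact absurd hk h0
  · exact hk'
end

section
/- For every m ≥ 2 there exists n ≥ 2 such that the disjoint union K_n ⊔ N_m (a complete graph on n vertices together with m isolated vertices) satisfies ϖ(K_n ∪ N_m) = 2; that is, there is a Marcello chain of length 2 from K_n ⊔ N_m to the complete graph on its n + m vertices, but no Marcello step from K_n ⊔ N_m to that complete graph. -/
open SimpleGraph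

attribute [local instance] Classical.propDecidable

/-- The intermediate graph: join of a complete and a null graph. -/
def midG (n m : ℕ) : SimpleGraph (Fin n ⊕ Fin m) where
  Adj u v := u ≠ v ∧ (u.isLeft = true ∨ v.isLeft = true)
  symm := ⟨fun _ _ h => ⟨h.1.symm, h.2.symm⟩⟩
  loopless := ⟨fun _ h => h.1 rfl⟩

theorem mdeg_start (n m : ℕ) (a : Fin n) :
    mdeg ((⊤ : SimpleGraph (Fin n)) ⊕g (⊥ : SimpleGraph (Fin m))) (Sum.inl a) = n - 1 := by
  have h : (((⊤ : SimpleGraph (Fin n)) ⊕g (⊥ : SimpleGraph (Fin m))).neighborSet (Sum.inl a))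
      = Sum.inl '' ({a}ᶜ : Set (Fin n)) := by
    ext x
    rcases x with x | x <;> simp [eq_comm]
  rw [mdeg, h, Set.ncard_image_of_injective _ Sum.inl_injective, Set.ncard_compl]
  simp

theorem mdeg_start_inr (n m : ℕ) (b : Fin m) :
    mdeg ((⊤ : SimpleGraph (Fin n)) ⊕g (⊥ : SimpleGraph (Fin m))) (Sum.inr b) = 0 := by
  have h : (((⊤ : SimpleGraph (Fin n)) ⊕g (⊥ : SimpleGraph (Fin m))).neighborSet (Sum.inr b))
      = ∅ := by
    ext x
    rcases x with x | x <;> simp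
  rw [mdeg, h, Set.ncard_empty]

theorem mdeg_mid (n m : ℕ) (b : Fin m) : mdeg (midG n m) (Sum.inr b) = n := by
  have h : (midG n m).neighborSet (Sum.inr b) = Sum.inl '' (Set.univ : Set (Fin n)) := by
    ext x
    rcases x with x | x <;> simp [midG]
  rw [mdeg, h, Set.ncard_image_of_injective _ Sum.inl_injective]
  simp

theorem new1 (n m : ℕ) (e : Sym2 (Fin n ⊕ Fin m))
    (he : e ∈ (midG n m).edgeSet \
      ((⊤ : SimpleGraph (Fin n)) ⊕g (⊥ : SimpleGraph (Fin m))).edgeSet) :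
    ∃ a b, e = s(Sum.inl a, Sum.inr b) := by
  induction e using Sym2.ind with
  | _ x y =>
    rcases x with x | x <;> rcases y with y | y <;> simp [midG] at he ⊢

theorem new2 (n m : ℕ) (e : Sym2 (Fin n ⊕ Fin m))
    (he : e ∈ (⊤ : SimpleGraph (Fin n ⊕ Fin m)).edgeSet \ (midG n m).edgeSet) :
    ∃ a b : Fin m, e = s(Sum.inr a, Sum.inr b) := by
  induction e using Sym2.ind with
  | _ x y =>
    rcases x with x | x <;> rcases y with y | y <;> simp [midG] at he ⊢
    exact ⟨x, y, Or.inl ⟨rfl, rfl⟩⟩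

theorem bound_aux {V : Type*} [Fintype V] (m : ℕ) (S : Set (Sym2 V)) (g : Fin m → Sym2 V)
    (h : ∀ e ∈ S, ∃ b, e = g b) : S.ncard ≤ m := by
  have h1 : S ⊆ g '' Set.univ := fun e he => by
    obtain ⟨b, rfl⟩ := h e he
    exact ⟨b, trivial, rfl⟩
  calc S.ncard ≤ (g '' Set.univ).ncard := Set.ncard_le_ncard h1 (Set.toFinite _)
    _ ≤ (Set.univ : Set (Fin m)).ncard := Set.ncard_image_le (Set.toFinite _)
    _ = m := by simp

theorem step1 (m : ℕ) (hm : 2 ≤ m) :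
    MarcelloStep ((⊤ : SimpleGraph (Fin (m+1))) ⊕g (⊥ : SimpleGraph (Fin m)))
      (midG (m+1) m) := by
  refine ⟨?_, ?_⟩
  · intro x y h
    rcases x with x | x <;> rcases y with y | y <;> simp_all [midG]
  have hex : ∀ e : Sym2 (Fin (m+1) ⊕ Fin m), ∃ v : Fin (m+1) ⊕ Fin m, e ∈ (midG (m+1) m).edgeSet \
      ((⊤ : SimpleGraph (Fin (m+1))) ⊕g (⊥ : SimpleGraph (Fin m))).edgeSet →
      ∃ a b, v = Sum.inl a ∧ e = s(Sum.inl a, Sum.inr b) := by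
    intro e
    by_cases he : e ∈ (midG (m+1) m).edgeSet \
      ((⊤ : SimpleGraph (Fin (m+1))) ⊕g (⊥ : SimpleGraph (Fin m))).edgeSet
    · obtain ⟨a, b, h⟩ := new1 _ _ e he
      exact ⟨Sum.inl a, fun _ => ⟨a, b, rfl, h⟩⟩
    · exact ⟨Sum.inl 0, fun h => absurd h he⟩
  choose f hf using hex
  refine ⟨f, ?_, ?_, ?_⟩
  · intro e he
    obtain ⟨a, b, h1, h2⟩ := hf e he
    rw [h1, h2]; simp
  · rintro v ⟨e, he, rfl⟩
    obtain ⟨a, b, h1, h2⟩ := hf e he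
    rw [h1, mdeg_start]
    simp
    omega
  · rintro (v | v)
    · rw [mdeg_start]
      apply bound_aux m _ (fun b => s(Sum.inl v, Sum.inr b))
      rintro e ⟨he, hv⟩
      obtain ⟨a, b, h1, h2⟩ := hf e he
      have h3 : f e = Sum.inl v := hv
      rw [h1] at h3
      exact ⟨b, by rw [h2, h3]⟩
    · rw [mdeg_start_inr]
      refine bound_aux 0 _ (fun _ => s(Sum.inr v, Sum.inr v)) ?_
      rintro e ⟨he, hv⟩
      obtain ⟨a, b, h1, h2⟩ := hf e he
      have h3 : f e = Sum.inr v := hv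
      rw [h1] at h3
      cases h3

theorem step2 (m : ℕ) (hm : 2 ≤ m) : MarcelloStep (midG (m+1) m) ⊤ := by
  refine ⟨le_top, ?_⟩
  have hex : ∀ e : Sym2 (Fin (m+1) ⊕ Fin m), ∃ v : Fin (m+1) ⊕ Fin m, e ∈
      (⊤ : SimpleGraph (Fin (m+1) ⊕ Fin m)).edgeSet \ (midG (m+1) m).edgeSet →
      ∃ a b : Fin m, v = Sum.inr a ∧ e = s(Sum.inr a, Sum.inr b) := by
    intro e
    by_cases he : e ∈ (⊤ : SimpleGraph (Fin (m+1) ⊕ Fin m)).edgeSet \ (midG (m+1) m).edgeSet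
    · obtain ⟨a, b, h⟩ := new2 _ _ e he
      exact ⟨Sum.inr a, fun _ => ⟨a, b, rfl, h⟩⟩
    · exact ⟨Sum.inl 0, fun h => absurd h he⟩
  choose f hf using hex
  refine ⟨f, ?_, ?_, ?_⟩
  · intro e he
    obtain ⟨a, b, h1, h2⟩ := hf e he
    rw [h1, h2]; simp
  · rintro v ⟨e, he, rfl⟩
    obtain ⟨a, b, h1, h2⟩ := hf e he
    rw [h1, mdeg_mid]
    simp
    omega
  · rintro (v | v)
    · refine (bound_aux 0 _ (fun _ => s(Sum.inl v, Sum.inl v)) ?_).trans (Nat.zero_le _)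
      rintro e ⟨he, hv⟩
      obtain ⟨a, b, h1, h2⟩ := hf e he
      have h3 : f e = Sum.inl v := hv
      rw [h1] at h3
      cases h3
    · rw [mdeg_mid]
      refine (bound_aux m _ (fun b => s(Sum.inr v, Sum.inr b)) ?_).trans (Nat.le_succ m)
      rintro e ⟨he, hv⟩
      obtain ⟨a, b, h1, h2⟩ := hf e he
      have h3 : f e = Sum.inr v := hv
      rw [h1] at h3
      exact ⟨b, by rw [h2, h3]⟩

theorem no_step (n m : ℕ) (hm : 2 ≤ m) :
    ¬ MarcelloStep ((⊤ : SimpleGraph (Fin n)) ⊕g (⊥ : SimpleGraph (Fin m)))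
        (⊤ : SimpleGraph (Fin n ⊕ Fin m)) := by
  rintro ⟨-, f, h1, h2, -⟩
  have he : s(Sum.inr ⟨0, by omega⟩, Sum.inr ⟨1, by omega⟩) ∈
      (⊤ : SimpleGraph (Fin n ⊕ Fin m)).edgeSet \
      ((⊤ : SimpleGraph (Fin n)) ⊕g (⊥ : SimpleGraph (Fin m))).edgeSet := by
    simp
  have h3 := (h2 _ ⟨_, he, rfl⟩).1
  have h4 := h1 _ he
  rw [Sym2.mem_iff] at h4
  rcases h4 with h4 | h4 <;> rw [h4, mdeg_start_inr] at h3 <;> exact absurd h3 (lt_irrefl 0)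

/-- For every `m ≥ 2` there exists `n ≥ 2` with `ϖ(K_n ∪ N_m) = 2`: there is a Marcello
chain of length `2` to the complete graph, but no single Marcello step completes it. -/
theorem exists_marcello_union_complete_null (m : ℕ) (hm : 2 ≤ m) :
    ∃ n : ℕ, 2 ≤ n ∧
      marcelloNumber ((⊤ : SimpleGraph (Fin n)) ⊕g (⊥ : SimpleGraph (Fin m))) = 2 ∧
      MarcelloChain ((⊤ : SimpleGraph (Fin n)) ⊕g (⊥ : SimpleGraph (Fin m)))
        (⊤ : SimpleGraph (Fin n ⊕ Fin m)) 2 ∧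
      ¬ MarcelloStep ((⊤ : SimpleGraph (Fin n)) ⊕g (⊥ : SimpleGraph (Fin m)))
        (⊤ : SimpleGraph (Fin n ⊕ Fin m)) := by
  have hns := no_step (m+1) m hm
  have hch : MarcelloChain ((⊤ : SimpleGraph (Fin (m+1))) ⊕g (⊥ : SimpleGraph (Fin m)))
        (⊤ : SimpleGraph (Fin (m+1) ⊕ Fin m)) 2 := by
    refine ⟨fun i => match i with
      | 0 => (⊤ : SimpleGraph (Fin (m+1))) ⊕g (⊥ : SimpleGraph (Fin m))
      | 1 => midG (m+1) m
      | _ => ⊤, rfl, rfl, ?_⟩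
    intro i hi
    interval_cases i
    · exact step1 m hm
    · exact step2 m hm
  refine ⟨m+1, by omega, ?_, hch, hns⟩
  unfold marcelloNumber
  apply le_antisymm
  · exact Nat.sInf_le hch
  · refine le_csInf ⟨2, hch⟩ ?_
    rintro k ⟨c, h0, hk, hs⟩
    by_contra hlt
    have hk2 : k = 0 ∨ k = 1 := by omega
    rcases hk2 with rfl | rfl
    · have h : (⊤ : SimpleGraph (Fin (m+1) ⊕ Fin m)).Adj
          (Sum.inr ⟨0, by omega⟩) (Sum.inr ⟨1, by omega⟩) := by simp
      rw [← hk, h0] at h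
      simp at h
    · have h := hs 0 (by omega)
      rw [h0, zero_add, hk] at h
      exact hns h
end

section
/- For every n with 3 ≤ n ≤ 6, there is a Marcello step from the path graph P_n (vertices v_1, …, v_n with edges v_i v_{i+1} for 1 ≤ i ≤ n−1) to the complete graph on its n vertices; since P_n is not complete for n ≥ 3, ϖ(P_n) = 1 for n = 3, 4, 5, 6. -/
open SimpleGraph

attribute [local instance] Classical.propDecidable

theorem mdeg_path_aux (n : ℕ) (v : Fin n) : mdeg (SimpleGraph.pathGraph n) v =
    (@Finset.filter (Fin n) (fun w => v.val + 1 = w.val ∨ w.val + 1 = v.val)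
      (fun _ => instDecidableOr) Finset.univ).card := by
  unfold mdeg
  rw [← Set.ncard_coe_finset]
  congr 1
  ext w
  simp [SimpleGraph.pathGraph_adj]

theorem step_aux (n : ℕ) (t : Fin n → List (Fin n))
    (h1 : ∀ a b : Fin n, a.val < b.val → a.val + 1 ≠ b.val → b ∈ t a ∨ a ∈ t b)
    (h2 : ∀ v : Fin n, (t v).length ≤
      (@Finset.filter (Fin n) (fun w => v.val + 1 = w.val ∨ w.val + 1 = v.val)
      (fun _ => instDecidableOr) Finset.univ).card)
    (h3 : ∀ v : Fin n, (t v).length ≠ 0 →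
      (@Finset.filter (Fin n) (fun w => v.val + 1 = w.val ∨ w.val + 1 = v.val)
      (fun _ => instDecidableOr) Finset.univ).card < n - 1) :
    MarcelloStep (SimpleGraph.pathGraph n) (⊤ : SimpleGraph (Fin n)) := by
  have key : ∀ e : Sym2 (Fin n), ∃ v : Fin n,
      e ∈ (⊤ : SimpleGraph (Fin n)).edgeSet \ (SimpleGraph.pathGraph n).edgeSet →
      ∃ w ∈ t v, e = s(v, w) := by
    intro e
    induction e using Sym2.ind with
    | _ a b =>
      by_cases h : s(a, b) ∈ (⊤ : SimpleGraph (Fin n)).edgeSet \ (SimpleGraph.pathGraph n).edgeSet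
      · have h' := h
        simp only [Set.mem_sdiff, SimpleGraph.mem_edgeSet, SimpleGraph.top_adj,
          SimpleGraph.pathGraph_adj, not_or] at h'
        obtain ⟨hne, h4, h5⟩ := h'
        have hne' : a.val ≠ b.val := fun h => hne (Fin.ext h)
        have : b ∈ t a ∨ a ∈ t b := by
          rcases lt_or_gt_of_ne hne' with hl | hl
          · exact h1 a b hl h4
          · exact (h1 b a hl h5).symm
        rcases this with h | h
        · exact ⟨a, fun _ => ⟨b, h, rfl⟩⟩
        · exact ⟨b, fun _ => ⟨a, h, Sym2.eq_swap⟩⟩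
      · exact ⟨a, fun h' => absurd h' h⟩
  choose f hf using key
  refine ⟨le_top, f, ?_, ?_, ?_⟩
  · intro e he
    obtain ⟨w, _, h⟩ := hf e he
    have hm : f e ∈ s(f e, w) := Sym2.mem_mk_left _ _
    rwa [← h] at hm
  · rintro v ⟨e, he, rfl⟩
    obtain ⟨w, hw, h⟩ := hf e he
    have hl := List.length_pos_of_mem hw
    rw [mdeg_path_aux, Fintype.card_fin]
    exact ⟨lt_of_lt_of_le hl (h2 _), h3 _ hl.ne'⟩
  · intro v
    rw [mdeg_path_aux]
    refine le_trans ?_ (h2 v)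
    have hsub : ((⊤ : SimpleGraph (Fin n)).edgeSet \ (SimpleGraph.pathGraph n).edgeSet) ∩
        {e | f e = v} ⊆ (((t v).map (fun w => s(v, w))).toFinset : Set (Sym2 (Fin n))) := by
      rintro e ⟨he, hv⟩
      obtain ⟨w, hw, h⟩ := hf e he
      have hv' : f e = v := hv
      rw [hv'] at hw h
      simp only [List.coe_toFinset, List.mem_map, Set.mem_ofPred_eq]
      exact ⟨w, hw, h.symm⟩
    refine (Set.ncard_le_ncard hsub (Finset.finite_toSet _)).trans ?_
    rw [Set.ncard_coe_finset]
    exact (List.toFinset_card_le _).trans (by simp)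

theorem step_small (n : ℕ) (h3 : 3 ≤ n) (h6 : n ≤ 6) :
    MarcelloStep (SimpleGraph.pathGraph n) (⊤ : SimpleGraph (Fin n)) := by
  interval_cases n
  · exact step_aux 3 ![[2], [], []] (by decide) (by decide) (by decide)
  · exact step_aux 4 ![[], [3], [0], [0]] (by decide) (by decide) (by decide)
  · exact step_aux 5 ![[], [4], [0, 4], [0, 1], [0]] (by decide) (by decide) (by decide)
  · exact step_aux 6 ![[5], [4, 5], [0, 5], [0, 1], [0, 2], [3]]
      (by decide) (by decide) (by decide)

/-- For `3 ≤ n ≤ 6`, one Marcello step completes the path `P_n`, and `ϖ(P_n) = 1`. -/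
theorem marcello_path_small (n : ℕ) (h3 : 3 ≤ n) (h6 : n ≤ 6) :
    MarcelloStep (SimpleGraph.pathGraph n) (⊤ : SimpleGraph (Fin n)) ∧
      marcelloNumber (SimpleGraph.pathGraph n) = 1 := by
  have hs := step_small n h3 h6
  refine ⟨hs, ?_⟩
  unfold marcelloNumber
  have hmem : 1 ∈ {k | MarcelloChain (SimpleGraph.pathGraph n) (⊤ : SimpleGraph (Fin n)) k} := by
    refine ⟨fun i => if i = 0 then SimpleGraph.pathGraph n else ⊤, by simp, by simp, ?_⟩
    intro i hi
    obtain rfl : i = 0 := by omega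
    simpa using hs
  apply le_antisymm (Nat.sInf_le hmem)
  by_contra hlt
  have h0 : sInf {k | MarcelloChain (SimpleGraph.pathGraph n) (⊤ : SimpleGraph (Fin n)) k} = 0 := by
    omega
  have hm := Nat.sInf_mem ⟨1, hmem⟩
  rw [h0] at hm
  obtain ⟨c, hc, hc', _⟩ := hm
  have heq : SimpleGraph.pathGraph n = ⊤ := hc.symm.trans hc'
  have hadj : (SimpleGraph.pathGraph n).Adj ⟨0, by omega⟩ ⟨2, by omega⟩ := by
    rw [heq]; simp
  simp [SimpleGraph.pathGraph_adj] at hadj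
end

section
/- The path graph P_7 on 7 vertices satisfies ϖ(P_7) = 2: there is no Marcello step from P_7 to the complete graph K_7, but there is a Marcello chain of length 2 from P_7 to K_7. -/
open SimpleGraph

attribute [local instance] Classical.propDecidable

section helpers
attribute [-instance] Classical.propDecidable

def mG1 : SimpleGraph (Fin 7) where
  Adj a b := a ≠ b ∧ s(a, b) ∉ [s(0, 6), s(0, 3), s(6, 2)]
  symm := ⟨by
    intro a b h
    rw [Sym2.eq_swap (a := b) (b := a)]
    exact ⟨h.1.symm, h.2⟩⟩
  loopless := ⟨fun a h => h.1 rfl⟩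

instance : DecidableRel mG1.Adj := fun a b =>
  inferInstanceAs (Decidable (a ≠ b ∧ s(a, b) ∉ [s(0, 6), s(0, 3), s(6, 2)]))

instance : DecidableRel (SimpleGraph.pathGraph 7).Adj := fun a b =>
  decidable_of_iff (a.val + 1 = b.val ∨ b.val + 1 = a.val)
    SimpleGraph.pathGraph_adj.symm

def mf0 (e : Sym2 (Fin 7)) : Fin 7 :=
  if e ∈ [s(0, 2)] then 0 else
  if e ∈ [s(1, 3), s(1, 4)] then 1 else
  if e ∈ [s(2, 4), s(2, 5)] then 2 else
  if e ∈ [s(3, 5), s(3, 6)] then 3 else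
  if e ∈ [s(4, 6), s(4, 0)] then 4 else
  if e ∈ [s(5, 0), s(5, 1)] then 5 else 6

def mf1 (e : Sym2 (Fin 7)) : Fin 7 :=
  if e = s(0, 6) then 0 else if e = s(0, 3) then 3 else 2

theorem mdeg_eq (G : SimpleGraph (Fin 7)) [DecidableRel G.Adj] (v : Fin 7) :
    mdeg G v = (Finset.univ.filter (fun w => G.Adj v w)).card := by
  rw [mdeg, ← Set.ncard_coe_finset]
  congr 1
  ext w
  simp

theorem fib_eq (G G' : SimpleGraph (Fin 7)) [DecidableRel G.Adj] [DecidableRel G'.Adj]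
    (f : Sym2 (Fin 7) → Fin 7) (v : Fin 7) :
    ((G'.edgeSet \ G.edgeSet) ∩ {e | f e = v}).ncard =
    (Finset.univ.filter (fun e => (e ∈ G'.edgeSet ∧ e ∉ G.edgeSet) ∧ f e = v)).card := by
  rw [← Set.ncard_coe_finset]
  congr 1
  ext w
  simp

theorem step_of (G G' : SimpleGraph (Fin 7)) [DecidableRel G.Adj] [DecidableRel G'.Adj]
    (f : Sym2 (Fin 7) → Fin 7)
    (h0 : ∀ a b, G.Adj a b → G'.Adj a b)
    (h1 : ∀ e, e ∈ G'.edgeSet → e ∉ G.edgeSet → f e ∈ e)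
    (h2 : ∀ e, e ∈ G'.edgeSet → e ∉ G.edgeSet →
      0 < (Finset.univ.filter (fun w => G.Adj (f e) w)).card ∧
      (Finset.univ.filter (fun w => G.Adj (f e) w)).card < 6)
    (h3 : ∀ v, (Finset.univ.filter
        (fun e => (e ∈ G'.edgeSet ∧ e ∉ G.edgeSet) ∧ f e = v)).card ≤
      (Finset.univ.filter (fun w => G.Adj v w)).card) : MarcelloStep G G' := by
  refine ⟨fun a b h => h0 a b h, f, fun e he => h1 e he.1 he.2, ?_, ?_⟩
  · rintro v ⟨e, he, rfl⟩
    rw [mdeg_eq]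
    simpa using h2 e he.1 he.2
  · intro v
    rw [mdeg_eq, fib_eq]
    exact h3 v

set_option maxRecDepth 100000 in
theorem mstep0 : MarcelloStep (SimpleGraph.pathGraph 7) mG1 :=
  step_of _ _ mf0 (by decide) (by decide) (by decide) (by decide)

set_option maxRecDepth 100000 in
theorem mstep1 : MarcelloStep mG1 ⊤ :=
  step_of _ _ mf1 (by decide) (by decide) (by decide) (by decide)

theorem path_deg_sum : ∑ v : Fin 7, (Finset.univ.filter
    (fun w => (SimpleGraph.pathGraph 7).Adj v w)).card = 12 := by decide

set_option maxRecDepth 100000 in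
theorem missing_card : (Finset.univ.filter (fun e : Sym2 (Fin 7) =>
    e ∈ (⊤ : SimpleGraph (Fin 7)).edgeSet ∧
      e ∉ (SimpleGraph.pathGraph 7).edgeSet)).card = 15 := by decide

theorem no_step_s12 : ¬ MarcelloStep (SimpleGraph.pathGraph 7) (⊤ : SimpleGraph (Fin 7)) := by
  rintro ⟨-, f, -, -, h⟩
  have h1 := Finset.sum_le_sum (s := Finset.univ) fun v _ => h v
  simp only [mdeg_eq, fib_eq] at h1
  rw [path_deg_sum] at h1
  have h2 := Finset.card_eq_sum_card_fiberwise (f := f) (t := Finset.univ)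
    (s := Finset.univ.filter (fun e : Sym2 (Fin 7) =>
    e ∈ (⊤ : SimpleGraph (Fin 7)).edgeSet ∧
      e ∉ (SimpleGraph.pathGraph 7).edgeSet)) (fun _ _ => by simp)
  rw [missing_card] at h2
  simp only [Finset.filter_filter] at h2
  omega

theorem path_ne_top : SimpleGraph.pathGraph 7 ≠ ⊤ := by
  intro h
  have : (SimpleGraph.pathGraph 7).Adj 0 2 := by rw [h]; decide
  revert this
  decide

theorem mchain : MarcelloChain (SimpleGraph.pathGraph 7) (⊤ : SimpleGraph (Fin 7)) 2 := by
  refine ⟨fun i => match i with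
    | 0 => SimpleGraph.pathGraph 7
    | 1 => mG1
    | _ => ⊤, rfl, rfl, ?_⟩
  intro i hi
  interval_cases i
  · exact mstep0
  · exact mstep1

end helpers

/-- `ϖ(P_7) = 2`: no single Marcello step completes `P_7`, but there is a
Marcello chain of length `2` from `P_7` to `K_7`. -/
theorem marcello_path_seven :
    ¬ MarcelloStep (SimpleGraph.pathGraph 7) (⊤ : SimpleGraph (Fin 7)) ∧
      MarcelloChain (SimpleGraph.pathGraph 7) (⊤ : SimpleGraph (Fin 7)) 2 ∧
      marcelloNumber (SimpleGraph.pathGraph 7) = 2 := by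
  refine ⟨no_step_s12, mchain, le_antisymm (Nat.sInf_le mchain) ?_⟩
  refine le_csInf ⟨2, mchain⟩ ?_
  rintro k ⟨c, h0, hk, hs⟩
  by_contra hlt
  have hk2 : k < 2 := by omega
  interval_cases k
  · exact path_ne_top (h0.symm.trans hk)
  · have := hs 0 (by omega)
    rw [h0, hk] at this
    exact no_step_s12 this
end

section
/- For n ≥ 2 and m ≥ 1, let G be the graph obtained from the disjoint union K_n ⊔ K_m of two complete graphs by adding one edge between a vertex of K_n and a vertex of K_m (the 'pearled' graph K̃_n K̃_m). Then there is a Marcello step from G to the complete graph on its n + m vertices; i.e., ϖ(K̃_n K̃_m) = 1. -/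
open SimpleGraph

attribute [local instance] Classical.propDecidable

/-- The pearled graph, for local use. -/
def pearled (n m : ℕ) (a : Fin n) (b : Fin m) : SimpleGraph (Fin n ⊕ Fin m) :=
  ((⊤ : SimpleGraph (Fin n)) ⊕g (⊤ : SimpleGraph (Fin m))) ⊔
          SimpleGraph.fromEdgeSet {s(Sum.inl a, Sum.inr b)}

lemma pearled_ll {n m : ℕ} {a : Fin n} {b : Fin m} (u v : Fin n) :
    (pearled n m a b).Adj (Sum.inl u) (Sum.inl v) ↔ u ≠ v := by
  simp [pearled]

lemma pearled_rr {n m : ℕ} {a : Fin n} {b : Fin m} (u v : Fin m) :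
    (pearled n m a b).Adj (Sum.inr u) (Sum.inr v) ↔ u ≠ v := by
  simp [pearled]

lemma pearled_lr {n m : ℕ} {a : Fin n} {b : Fin m} (u : Fin n) (v : Fin m) :
    (pearled n m a b).Adj (Sum.inl u) (Sum.inr v) ↔ (u = a ∧ v = b) := by
  simp [pearled]

lemma pearled_new {n m : ℕ} {a : Fin n} {b : Fin m} (e : Sym2 (Fin n ⊕ Fin m))
    (he : e ∈ (⊤ : SimpleGraph (Fin n ⊕ Fin m)).edgeSet \ (pearled n m a b).edgeSet) :
    ∃ u v, e = s(Sum.inl u, Sum.inr v) ∧ ¬ (u = a ∧ v = b) := by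
  induction e using Sym2.ind with
  | _ x y =>
    obtain ⟨h1, h2⟩ := he
    rw [SimpleGraph.mem_edgeSet] at h1 h2
    rw [SimpleGraph.top_adj] at h1
    rcases x with x | x <;> rcases y with y | y
    · rw [pearled_ll] at h2; simp_all
    · rw [pearled_lr] at h2; exact ⟨x, y, rfl, h2⟩
    · rw [SimpleGraph.adj_comm, pearled_lr] at h2; exact ⟨y, x, Sym2.eq_swap, h2⟩
    · rw [pearled_rr] at h2; simp_all

lemma mdeg_l {n m : ℕ} {a : Fin n} {b : Fin m} (u : Fin n) :
    n - 1 ≤ mdeg (pearled n m a b) (Sum.inl u) := by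
  have h : Sum.inl '' ({u}ᶜ : Set (Fin n)) ⊆ (pearled n m a b).neighborSet (Sum.inl u) := by
    rintro _ ⟨w, hw, rfl⟩
    rw [SimpleGraph.mem_neighborSet, pearled_ll]
    exact fun h => hw h.symm
  have h2 := Set.ncard_le_ncard h (Set.toFinite _)
  rw [Set.ncard_image_of_injective _ Sum.inl_injective, Set.ncard_compl] at h2
  simpa [mdeg] using h2

lemma mdeg_r {n m : ℕ} {a : Fin n} {b : Fin m} (u : Fin m) :
    m - 1 ≤ mdeg (pearled n m a b) (Sum.inr u) := by
  have h : Sum.inr '' ({u}ᶜ : Set (Fin m)) ⊆ (pearled n m a b).neighborSet (Sum.inr u) := by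
    rintro _ ⟨w, hw, rfl⟩
    rw [SimpleGraph.mem_neighborSet, pearled_rr]
    exact fun h => hw h.symm
  have h2 := Set.ncard_le_ncard h (Set.toFinite _)
  rw [Set.ncard_image_of_injective _ Sum.inr_injective, Set.ncard_compl] at h2
  simpa [mdeg] using h2

lemma mdeg_lt {V : Type*} [Fintype V] (G : SimpleGraph V) (v w : V) (hvw : v ≠ w)
    (h : ¬ G.Adj v w) : mdeg G v < Fintype.card V - 1 := by
  have h1 : G.neighborSet v ⊆ ({v, w}ᶜ : Set V) := by
    intro x hx hx'
    rcases hx' with rfl | rfl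
    · exact G.loopless.irrefl _ hx
    · exact h hx
  have h2 := Set.ncard_le_ncard h1 (Set.toFinite _)
  have h4 := Set.ncard_add_ncard_compl ({v, w} : Set V)
  rw [Set.ncard_pair hvw, Nat.card_eq_fintype_card] at h4
  unfold mdeg
  omega

/-- Initiator from a choice predicate. -/
noncomputable def initr {n m : ℕ} (g : Fin n → Fin m → Prop) (e : Sym2 (Fin n ⊕ Fin m)) :
    Fin n ⊕ Fin m :=
  if h : ∃ p : Fin n × Fin m, e = s(Sum.inl p.1, Sum.inr p.2) then
    (if g h.choose.1 h.choose.2 then Sum.inl h.choose.1 else Sum.inr h.choose.2)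
  else e.out.1

lemma initr_eq {n m : ℕ} (g : Fin n → Fin m → Prop) (u : Fin n) (v : Fin m) :
    initr g s(Sum.inl u, Sum.inr v) = if g u v then Sum.inl u else Sum.inr v := by
  have h : ∃ p : Fin n × Fin m,
    s((Sum.inl u : Fin n ⊕ Fin m), Sum.inr v) = s(Sum.inl p.1, Sum.inr p.2) := ⟨(u, v), rfl⟩
  have hs := h.choose_spec
  rw [Sym2.eq_iff] at hs
  have h1 : h.choose.1 = u := by
    rcases hs with ⟨h1, h2⟩ | ⟨h1, h2⟩
    · exact (Sum.inl_injective h1).symm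
    · simp at h1
  have h2 : h.choose.2 = v := by
    rcases hs with ⟨h1, h2⟩ | ⟨h1, h2⟩
    · exact (Sum.inr_injective h2).symm
    · simp at h1
  unfold initr
  rw [dif_pos h, h1, h2]

lemma pearled_step (n m : ℕ) (hn : 2 ≤ n) (a : Fin n) (b : Fin m) :
    MarcelloStep (pearled n m a b) ⊤ := by
  set g : Fin n → Fin m → Prop := fun _ v => m < n ∨ (n = m ∧ v ≠ b) with hg
  refine ⟨le_top, initr g, ?_, ?_, ?_⟩
  · intro e he
    obtain ⟨u, v, rfl, -⟩ := pearled_new e he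
    rw [initr_eq]
    split_ifs <;> simp
  · rintro w ⟨e, he, rfl⟩
    obtain ⟨u, v, rfl, h⟩ := pearled_new e he
    rw [initr_eq]
    split_ifs with hgu
    · have := mdeg_l (a := a) (b := b) u
      exact ⟨by omega, mdeg_lt _ _ (Sum.inr v) (by simp) (by rwa [pearled_lr])⟩
    · have := mdeg_r (a := a) (b := b) v
      have : ¬ m < n := fun h => hgu (Or.inl h)
      exact ⟨by omega, mdeg_lt _ _ (Sum.inl u) (by simp)
        (by rwa [SimpleGraph.adj_comm, pearled_lr])⟩
  · rintro (u | v)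
    · refine le_trans ?_ (mdeg_l u)
      have hsub : ((⊤ : SimpleGraph (Fin n ⊕ Fin m)).edgeSet \ (pearled n m a b).edgeSet) ∩
          {e | initr g e = Sum.inl u} ⊆
          (fun v : Fin m => s((Sum.inl u : Fin n ⊕ Fin m), Sum.inr v)) '' {v | g u v} := by
        rintro e ⟨he, he2⟩
        obtain ⟨u', v', rfl, h⟩ := pearled_new e he
        rw [Set.mem_setOf_eq, initr_eq] at he2
        split_ifs at he2 with hh
        obtain rfl := Sum.inl_injective he2
        exact ⟨v', hh, rfl⟩
      refine (Set.ncard_le_ncard hsub (Set.toFinite _)).trans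
        ((Set.ncard_image_le (Set.toFinite _)).trans ?_)
      by_cases h1 : m < n
      · have := Set.ncard_le_card {v | g u v}
        simp only [Nat.card_eq_fintype_card, Fintype.card_fin] at this
        omega
      · have h2 : {v | g u v} ⊆ (if n = m then {b}ᶜ else ∅ : Set (Fin m)) := by
          intro v hv
          rcases hv with hv | ⟨hv, hv'⟩
          · exact absurd hv h1
          · rw [if_pos hv]; exact hv'
        have h3 := Set.ncard_le_ncard h2 (Set.toFinite _)
        split_ifs at h3 with h4
        · rw [Set.ncard_compl] at h3
          simp at h3
          omega
        · simp at h3 ⊢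
          omega
    · refine le_trans ?_ (mdeg_r v)
      have hsub : ((⊤ : SimpleGraph (Fin n ⊕ Fin m)).edgeSet \ (pearled n m a b).edgeSet) ∩
          {e | initr g e = Sum.inr v} ⊆
          (fun u : Fin n => s((Sum.inl u : Fin n ⊕ Fin m), Sum.inr v)) ''
            {u | ¬ g u v ∧ ¬ (u = a ∧ v = b)} := by
        rintro e ⟨he, he2⟩
        obtain ⟨u', v', rfl, h⟩ := pearled_new e he
        rw [Set.mem_setOf_eq, initr_eq] at he2
        split_ifs at he2 with hh
        obtain rfl := Sum.inr_injective he2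
        exact ⟨u', ⟨hh, h⟩, rfl⟩
      refine (Set.ncard_le_ncard hsub (Set.toFinite _)).trans
        ((Set.ncard_image_le (Set.toFinite _)).trans ?_)
      by_cases h1 : n < m
      · have := Set.ncard_le_card {u | ¬ g u v ∧ ¬ (u = a ∧ v = b)}
        simp only [Nat.card_eq_fintype_card, Fintype.card_fin] at this
        omega
      · have h2 : {u | ¬ g u v ∧ ¬ (u = a ∧ v = b)} ⊆
            (if n = m then {a}ᶜ else ∅ : Set (Fin n)) := by
          rintro u ⟨hu, hu'⟩
          have hmn : n = m := by
            by_contra h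
            exact hu (Or.inl (by omega))
          rw [if_pos hmn]
          rintro rfl
          refine hu (Or.inr ⟨hmn, fun h => hu' ⟨rfl, h⟩⟩)
        have h3 := Set.ncard_le_ncard h2 (Set.toFinite _)
        split_ifs at h3 with h4
        · rw [Set.ncard_compl] at h3
          simp only [Nat.card_eq_fintype_card, Fintype.card_fin, Set.ncard_singleton] at h3
          omega
        · rw [Set.ncard_empty] at h3
          omega

/-- One Marcello step completes the graph obtained from `K_n ⊔ K_m` by adding one edge
between a vertex of `K_n` and a vertex of `K_m` (the pearled graph); its
Marcello number is `1`. -/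
theorem marcello_pearled_completes (n m : ℕ) (hn : 2 ≤ n) (hm : 1 ≤ m)
    (a : Fin n) (b : Fin m) :
    MarcelloStep
        (((⊤ : SimpleGraph (Fin n)) ⊕g (⊤ : SimpleGraph (Fin m))) ⊔
          SimpleGraph.fromEdgeSet {s(Sum.inl a, Sum.inr b)})
        (⊤ : SimpleGraph (Fin n ⊕ Fin m)) ∧
      marcelloNumber
        (((⊤ : SimpleGraph (Fin n)) ⊕g (⊤ : SimpleGraph (Fin m))) ⊔
          SimpleGraph.fromEdgeSet {s(Sum.inl a, Sum.inr b)}) = 1 := by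
  have hs := pearled_step n m hn a b
  refine ⟨hs, ?_⟩
  change marcelloNumber (pearled n m a b) = 1
  have h1 : (1 : ℕ) ∈ {k | MarcelloChain (pearled n m a b) ⊤ k} := by
    refine ⟨fun i => if i = 0 then pearled n m a b else ⊤, by simp, by simp, ?_⟩
    intro i hi
    obtain rfl : i = 0 := by omega
    simpa using hs
  have h0 : (0 : ℕ) ∉ {k | MarcelloChain (pearled n m a b) ⊤ k} := by
    rintro ⟨c, hc, hc', -⟩
    have : Nontrivial (Fin n) := Fin.nontrivial_iff_two_le.mpr hn
    obtain ⟨u, hu⟩ := exists_ne a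
    have h : (pearled n m a b).Adj (Sum.inl u) (Sum.inr b) := by
      rw [← hc, hc']; simp
    rw [pearled_lr] at h
    exact hu h.1
  have hle : marcelloNumber (pearled n m a b) ≤ 1 := Nat.sInf_le h1
  have hmem : marcelloNumber (pearled n m a b) ∈ _ := Nat.sInf_mem ⟨1, h1⟩
  have hne : marcelloNumber (pearled n m a b) ≠ 0 := fun h => h0 (h ▸ hmem)
  omega
end

section
/- Let n ≥ 7, let ℓ = ⌈n/6⌉ (the number of blocks in the decomposition of the path P_n into ⌊n/6⌋ consecutive subpaths of order 6 followed by a subpath on the remaining vertices), and let ex be the least nonnegative integer with ℓ ≤ 2^{ex+1}. Then there is a Marcello chain of length at most ex + 2 from the path graph P_n to the complete graph K_n; hence ϖ(P_n) ≤ ex + 2. -/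
open SimpleGraph

attribute [local instance] Classical.propDecidable

theorem step_of_rel {V : Type*} [Fintype V] {G G' : SimpleGraph V} (hle : G ≤ G')
    (R : V → V → Prop)
    (hR : ∀ u w, G'.Adj u w → ¬ G.Adj u w → R u w ∨ R w u)
    (hc : ∀ u, {w | G'.Adj u w ∧ ¬ G.Adj u w ∧ R u w}.ncard ≤ mdeg G u) :
    MarcelloStep G G' := by
  have hex : ∀ e : Sym2 V, ∃ v : V, e ∈ G'.edgeSet \ G.edgeSet → ∃ w, e = s(v, w) ∧ R v w := by
    intro e
    induction e using Sym2.ind with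
    | _ x y =>
      by_cases h : s(x, y) ∈ G'.edgeSet \ G.edgeSet
      · have h1 : G'.Adj x y := h.1
        have h2 : ¬ G.Adj x y := h.2
        rcases hR x y h1 h2 with h3 | h3
        · exact ⟨x, fun _ => ⟨y, rfl, h3⟩⟩
        · exact ⟨y, fun _ => ⟨x, Sym2.eq_swap, h3⟩⟩
      · exact ⟨x, fun h' => absurd h' h⟩
  choose f hf using hex
  have hcount : ∀ v : V, ((G'.edgeSet \ G.edgeSet) ∩ {e | f e = v}).ncard ≤ mdeg G v := by
    intro v
    refine le_trans ?_ (hc v)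
    refine le_trans (Set.ncard_le_ncard (t := (fun w => s(v, w)) ''
      {w | G'.Adj v w ∧ ¬ G.Adj v w ∧ R v w}) ?_ (Set.toFinite _)) (Set.ncard_image_le (Set.toFinite _))
    rintro e ⟨he, hv⟩
    obtain ⟨w, hw, hr⟩ := hf e he
    have hv' : f e = v := hv
    rw [hv'] at hw hr
    subst hw
    exact ⟨w, ⟨he.1, he.2, hr⟩, rfl⟩
  refine ⟨hle, f, ?_, ?_, hcount⟩
  · intro e he
    obtain ⟨w, hw, _⟩ := hf e he
    have : f e ∈ s(f e, w) := Sym2.mem_mk_left _ _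
    rwa [← hw] at this
  · rintro v ⟨e, he, hv⟩
    constructor
    · refine lt_of_lt_of_le ?_ (hcount v)
      rw [Set.ncard_pos (Set.toFinite _)]
      exact ⟨e, he, hv⟩
    · obtain ⟨w, hw, _⟩ := hf e he
      rw [hv] at hw
      subst hw
      have h1 : G'.Adj v w := he.1
      have h2 : ¬ G.Adj v w := he.2
      have hsub : insert v (insert w (G.neighborSet v)) ⊆ Set.univ := Set.subset_univ _
      have := Set.ncard_le_ncard hsub (Set.toFinite _)
      rw [Set.ncard_insert_of_notMem, Set.ncard_insert_of_notMem, Set.ncard_univ,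
        Nat.card_eq_fintype_card] at this
      · unfold mdeg
        omega
      · exact h2
      · simp [h1.ne]

/-- Path together with complete blocks of size `m`. -/
def blockG (n m : ℕ) : SimpleGraph (Fin n) where
  Adj u v := (u.val + 1 = v.val ∨ v.val + 1 = u.val) ∨ (u.val ≠ v.val ∧ u.val / m = v.val / m)
  symm := ⟨by rintro u v h; omega⟩
  loopless := ⟨by rintro u h; omega⟩

theorem path_adj (n : ℕ) (u v : Fin n) :
    (pathGraph n).Adj u v ↔ (u.val + 1 = v.val ∨ v.val + 1 = u.val) :=
  SimpleGraph.pathGraph_adj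

theorem block_step (n m : ℕ) (hn : 7 ≤ n) (hm : 0 < m) :
    MarcelloStep (blockG n m) (blockG n (m * 2)) := by
  have hdiv : ∀ x, x / (m * 2) = x / m / 2 := fun x => (Nat.div_div_eq_div_mul x m 2).symm
  refine step_of_rel ?_
    (fun u w => (u.val / m % 2 = 0 ∧ w.val ≠ u.val + m) ∨ (u.val / m % 2 = 1 ∧ u.val = w.val + m)) ?_ ?_
  · intro u v h
    rcases h with h | ⟨h1, h2⟩
    · exact Or.inl h
    · refine Or.inr ⟨h1, ?_⟩
      rw [hdiv, hdiv, h2]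
  · intro u w h h'
    simp only [blockG, hdiv] at h h'
    omega
  · intro u
    rcases Nat.mod_two_eq_zero_or_one (u.val / m) with hu | hu
    · -- even block: shift down by `m`
      unfold mdeg
      have key : ∀ w : Fin n, (blockG n (m * 2)).Adj u w → ¬ (blockG n m).Adj u w →
          m ≤ w.val ∧ (w.val - m) / m = u.val / m := by
        intro w h h'
        simp only [blockG, hdiv] at h h'
        have h1 : w.val / m = u.val / m + 1 := by omega
        have h2 : m ≤ w.val := by
          by_contra hlt
          rw [Nat.div_eq_of_lt (by omega)] at h1
          omega
        refine ⟨h2, ?_⟩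
        have := Nat.add_div_right (w.val - m) hm
        rw [Nat.sub_add_cancel h2] at this
        omega
      refine Set.ncard_le_ncard_of_injOn
        (fun w : Fin n => (⟨w.val - m, by omega⟩ : Fin n)) ?_ ?_ (Set.toFinite _)
      · rintro w ⟨h, h', hr⟩
        obtain ⟨k1, k2⟩ := key w h h'
        refine Or.inr ⟨?_, k2.symm⟩
        simp only
        omega
      · rintro w ⟨h, h', hr⟩ w' ⟨g, g', gr⟩ heq
        obtain ⟨k1, k2⟩ := key w h h'
        obtain ⟨l1, l2⟩ := key w' g g'
        simp only [Fin.mk.injEq] at heq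
        ext
        omega
    · have h1 : 1 ≤ mdeg (blockG n m) u := by
        unfold mdeg
        rw [Nat.one_le_iff_ne_zero, ← Nat.pos_iff_ne_zero, Set.ncard_pos (Set.toFinite _)]
        by_cases h0 : u.val = 0
        · exact ⟨⟨1, by omega⟩, Or.inl (Or.inl (by simp [h0]))⟩
        · exact ⟨⟨u.val - 1, by omega⟩, Or.inl (Or.inr (by simp only; omega))⟩
      refine le_trans ?_ h1
      rw [Set.ncard_le_one (Set.toFinite _)]
      rintro w ⟨_, _, hr⟩ w' ⟨_, _, hr'⟩
      ext
      omega

/-- First target of each vertex in the first step. -/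
def tgtA (u : ℕ) : ℕ :=
  6 * (u / 6) + (if u % 6 = 0 then 2 else if u % 6 = 1 then 4 else if u % 6 = 2 then 4
    else if u % 6 = 3 then 1 else 0)

/-- Second target of each vertex in the first step. -/
def tgtB (u : ℕ) : ℕ :=
  if u < 6 then
    (if u = 0 then 2 else if u = 1 then 5 else if u = 2 then 5
      else if u = 3 then 0 else if u = 4 then 0 else 3)
  else 6 * (u / 6) + (if u % 6 = 0 then 3 else if u % 6 = 1 then 5 else if u % 6 = 2 then 5
    else if u % 6 = 3 then 5 else 0)

set_option maxHeartbeats 1000000 in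
theorem tgt_cover (u w : ℕ) (h : u / 6 = w / 6) (h1 : u + 2 ≤ w) :
    w = tgtA u ∨ w = tgtB u ∨ u = tgtA w ∨ u = tgtB w := by
  obtain ⟨q, hq⟩ : ∃ q, q = u / 6 := ⟨_, rfl⟩
  obtain ⟨a, ha⟩ : ∃ a, a = u % 6 := ⟨_, rfl⟩
  obtain ⟨b, hb⟩ : ∃ b, b = w % 6 := ⟨_, rfl⟩
  have hu : u = 6 * q + a := by omega
  have hw : w = 6 * q + b := by omega
  have ha6 : a < 6 := by omega
  have hb6 : b < 6 := by omega
  have e1 : w / 6 = q := by omega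
  rcases Nat.eq_zero_or_pos q with h0 | h0
  · subst h0
    have hu6 : u < 6 := by omega
    have hw6 : w < 6 := by omega
    clear hq ha hb hu hw ha6 hb6 e1 h
    unfold tgtA tgtB
    interval_cases u <;> interval_cases w <;> simp at h1 ⊢
  · unfold tgtA tgtB
    rw [← ha, ← hb, ← hq, e1, if_neg (by omega : ¬ u < 6), if_neg (by omega : ¬ w < 6)]
    clear hq ha hb e1 h
    subst hu hw
    interval_cases a <;> interval_cases b <;> first | (exfalso; omega) | simp

theorem first_step (n : ℕ) (hn : 7 ≤ n) : MarcelloStep (pathGraph n) (blockG n 6) := by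
  refine step_of_rel ?_ (fun u w => w.val = tgtA u.val ∨ w.val = tgtB u.val) ?_ ?_
  · intro u v h
    exact Or.inl ((path_adj n u v).1 h)
  · intro u w h h'
    rw [path_adj] at h'
    simp only [blockG] at h
    rcases lt_or_ge u.val w.val with hl | hl
    · have := tgt_cover u w (by omega) (by omega)
      tauto
    · have := tgt_cover w u (by omega) (by omega)
      tauto
  · intro u
    by_cases hu : 0 < u.val ∧ u.val + 1 < n
    · have h2 : 2 ≤ mdeg (pathGraph n) u := by
        unfold mdeg
        have : ({⟨u.val - 1, by omega⟩, ⟨u.val + 1, by omega⟩} : Set (Fin n)) ⊆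
            (pathGraph n).neighborSet u := by
          rintro x (rfl | rfl)
          · exact (path_adj n _ _).2 (Or.inr (by simp only; omega))
          · exact (path_adj n _ _).2 (Or.inl rfl)
        refine le_trans ?_ (Set.ncard_le_ncard this (Set.toFinite _))
        rw [Set.ncard_pair]
        simp only [ne_eq, Fin.mk.injEq]
        omega
      refine le_trans ?_ h2
      have h3 : (Fin.val '' {w : Fin n | (blockG n 6).Adj u w ∧ ¬ (pathGraph n).Adj u w ∧
          (w.val = tgtA u.val ∨ w.val = tgtB u.val)}) ⊆ {tgtA u.val, tgtB u.val} := by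
        rintro _ ⟨w, ⟨_, _, h⟩, rfl⟩
        exact h
      rw [← Set.ncard_image_of_injective _ Fin.val_injective]
      refine le_trans (Set.ncard_le_ncard h3 (Set.toFinite _)) ?_
      exact (Set.ncard_insert_le _ _).trans (by simp)
    · have h1 : 1 ≤ mdeg (pathGraph n) u := by
        unfold mdeg
        rw [Nat.one_le_iff_ne_zero, ← Nat.pos_iff_ne_zero, Set.ncard_pos (Set.toFinite _)]
        by_cases h0 : u.val = 0
        · exact ⟨⟨1, by omega⟩, (path_adj n _ _).2 (Or.inl (by simp [h0]))⟩
        · exact ⟨⟨u.val - 1, by omega⟩, (path_adj n _ _).2 (Or.inr (by simp only; omega))⟩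
      refine le_trans ?_ h1
      have hall : ∀ w : Fin n, (w.val = tgtA u.val ∨ w.val = tgtB u.val) → w.val = tgtA u.val := by
        intro w h
        rcases h with h | h
        · exact h
        · have hw := w.isLt
          have hu' := u.isLt
          unfold tgtB at h
          unfold tgtA
          split_ifs at h ⊢ <;> omega
      rw [Set.ncard_le_one (Set.toFinite _)]
      rintro w ⟨_, _, hr⟩ w' ⟨_, _, hr'⟩
      ext
      rw [hall w hr, hall w' hr']

/-- For `n ≥ 7`, with `ℓ = ⌈n/6⌉` and `ex` the least nonnegative integer with
`ℓ ≤ 2 ^ (ex + 1)`, there is a Marcello chain of length at most `ex + 2` from `P_n`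
to `K_n`; hence `ϖ(P_n) ≤ ex + 2`. -/
theorem marcello_path_upper_bound (n : ℕ) (hn : 7 ≤ n) (ex : ℕ)
    (hex : ex = sInf {e : ℕ | (n + 5) / 6 ≤ 2 ^ (e + 1)}) :
    ∃ k ≤ ex + 2, MarcelloChain (SimpleGraph.pathGraph n) (⊤ : SimpleGraph (Fin n)) k := by
  have hmem : ex ∈ {e : ℕ | (n + 5) / 6 ≤ 2 ^ (e + 1)} := by
    rw [hex]
    apply Nat.sInf_mem
    refine ⟨n, ?_⟩
    have : n + 1 < 2 ^ (n + 1) := Nat.lt_two_pow_self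
    change (n + 5) / 6 ≤ 2 ^ (n + 1)
    omega
  have hle : (n + 5) / 6 ≤ 2 ^ (ex + 1) := hmem
  refine ⟨ex + 2, le_rfl, fun i => if i = 0 then pathGraph n else blockG n (6 * 2 ^ (i - 1)),
    by simp, ?_, ?_⟩
  · ext u v
    have hu := u.isLt
    have hv := v.isLt
    have e1 : u.val / (6 * 2 ^ (ex + 1)) = 0 := Nat.div_eq_of_lt (by omega)
    have e2 : v.val / (6 * 2 ^ (ex + 1)) = 0 := Nat.div_eq_of_lt (by omega)
    beta_reduce
    rw [if_neg (Nat.succ_ne_zero _), SimpleGraph.top_adj, show ex + 2 - 1 = ex + 1 from rfl]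
    change (_ ∨ (u.val ≠ v.val ∧ u.val / (6 * 2 ^ (ex + 1)) = v.val / (6 * 2 ^ (ex + 1)))) ↔ _
    rw [e1, e2, ne_eq u v, Fin.ext_iff]
    omega
  · intro i _
    rcases i with _ | i
    · simpa using first_step n hn
    · have := block_step n (6 * 2 ^ i) hn (by positivity)
      rw [mul_assoc, ← pow_succ] at this
      simpa using this
end

section
/- For every n with 4 ≤ n ≤ 7, there is a Marcello step from the cycle graph C_n (vertices v_1, …, v_n with edges v_i v_{i+1} for 1 ≤ i ≤ n−1 together with v_1 v_n) to the complete graph on its n vertices; since C_n is not complete for n ≥ 4, ϖ(C_n) = 1 for n = 4, 5, 6, 7. -/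
open SimpleGraph

attribute [local instance] Classical.propDecidable

attribute [-instance] Classical.propDecidable in
theorem hm4 : ∀ a b : Fin 4, a ≠ b → b ≠ a + 1 → a ≠ b + 1 →
      ∃ v, (a = v ∧ b = v + 2) ∨ (b = v ∧ a = v + 2) ∨ (a = v ∧ b = v + 3) ∨ (b = v ∧ a = v + 3) := by
  decide

attribute [-instance] Classical.propDecidable in
theorem hm5 : ∀ a b : Fin 5, a ≠ b → b ≠ a + 1 → a ≠ b + 1 →
      ∃ v, (a = v ∧ b = v + 2) ∨ (b = v ∧ a = v + 2) ∨ (a = v ∧ b = v + 3) ∨ (b = v ∧ a = v + 3) := by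
  decide

attribute [-instance] Classical.propDecidable in
theorem hm6 : ∀ a b : Fin 6, a ≠ b → b ≠ a + 1 → a ≠ b + 1 →
      ∃ v, (a = v ∧ b = v + 2) ∨ (b = v ∧ a = v + 2) ∨ (a = v ∧ b = v + 3) ∨ (b = v ∧ a = v + 3) := by
  decide

attribute [-instance] Classical.propDecidable in
theorem hm7 : ∀ a b : Fin 7, a ≠ b → b ≠ a + 1 → a ≠ b + 1 →
      ∃ v, (a = v ∧ b = v + 2) ∨ (b = v ∧ a = v + 2) ∨ (a = v ∧ b = v + 3) ∨ (b = v ∧ a = v + 3) := by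
  decide

theorem mdeg_cyc (m : ℕ) (v : Fin (m+4)) : mdeg (SimpleGraph.cycleGraph (m+4)) v = 2 := by
  unfold mdeg
  rw [SimpleGraph.cycleGraph_neighborSet]
  apply Set.ncard_pair
  intro h
  have h2 : (1:Fin (m+4)) + 1 = 0 := by
    have h3 : (1:Fin (m+4)) + 1 = (v + 1) - (v - 1) := by abel
    rw [h3, h, sub_self]
  have := congrArg Fin.val h2
  simp [Fin.val_add] at this
  rw [Nat.mod_eq_of_lt (by omega)] at this
  omega

theorem step_of_s15 (m : ℕ) (hm : ∀ a b : Fin (m+4), a ≠ b → b ≠ a + 1 → a ≠ b + 1 →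
      ∃ v, (a = v ∧ b = v + 2) ∨ (b = v ∧ a = v + 2) ∨ (a = v ∧ b = v + 3) ∨ (b = v ∧ a = v + 3)) :
    MarcelloStep (SimpleGraph.cycleGraph (m+4)) (⊤ : SimpleGraph (Fin (m+4))) := by
  have key : ∀ e : Sym2 (Fin (m+4)), ∃ v, e ∈ (⊤ : SimpleGraph (Fin (m+4))).edgeSet \ (SimpleGraph.cycleGraph (m+4)).edgeSet →
      e = s(v, v+2) ∨ e = s(v, v+3) := by
    intro e
    by_cases he : e ∈ (⊤ : SimpleGraph (Fin (m+4))).edgeSet \ (SimpleGraph.cycleGraph (m+4)).edgeSet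
    · induction e with | _ a b =>
      simp only [Set.mem_sdiff, SimpleGraph.mem_edgeSet, SimpleGraph.top_adj,
        SimpleGraph.cycleGraph_adj, not_or] at he
      obtain ⟨v, hv⟩ := hm a b he.1 (fun h => he.2.2 (by rw [h]; abel)) (fun h => he.2.1 (by rw [h]; abel))
      refine ⟨v, fun _ => ?_⟩
      rcases hv with ⟨h1, h2⟩ | ⟨h1, h2⟩ | ⟨h1, h2⟩ | ⟨h1, h2⟩ <;> subst h1 <;> subst h2 <;>
        simp [Sym2.eq_swap]
    · exact ⟨0, fun h => absurd h he⟩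
  choose f hf using key
  refine ⟨le_top, f, ?_, ?_, ?_⟩
  · intro e he
    rcases hf e he with h | h
    · have := Sym2.mem_mk_left (f e) (f e + 2)
      rwa [← h] at this
    · have := Sym2.mem_mk_left (f e) (f e + 3)
      rwa [← h] at this
  · intro v _
    rw [mdeg_cyc, Fintype.card_fin]
    omega
  · intro v
    rw [mdeg_cyc]
    calc _ ≤ ({s(v, v+2), s(v, v+3)} : Set (Sym2 (Fin (m+4)))).ncard := by
          apply Set.ncard_le_ncard _ (Set.toFinite _)
          rintro e ⟨he, rfl⟩
          exact hf e he
      _ ≤ 2 := (Set.ncard_insert_le _ _).trans (by rw [Set.ncard_singleton])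

theorem step_all (n : ℕ) (h4 : 4 ≤ n) (h7 : n ≤ 7) :
    MarcelloStep (SimpleGraph.cycleGraph n) (⊤ : SimpleGraph (Fin n)) := by
  interval_cases n
  · exact step_of_s15 0 (by exact hm4)
  · exact step_of_s15 1 (by exact hm5)
  · exact step_of_s15 2 (by exact hm6)
  · exact step_of_s15 3 (by exact hm7)

/-- For `4 ≤ n ≤ 7`, one Marcello step completes the cycle `C_n`, and `ϖ(C_n) = 1`. -/
theorem marcello_cycle_small (n : ℕ) (h4 : 4 ≤ n) (h7 : n ≤ 7) :
    MarcelloStep (SimpleGraph.cycleGraph n) (⊤ : SimpleGraph (Fin n)) ∧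
      marcelloNumber (SimpleGraph.cycleGraph n) = 1 := by
  have hs := step_all n h4 h7
  refine ⟨hs, ?_⟩
  have h1 : MarcelloChain (SimpleGraph.cycleGraph n) (⊤ : SimpleGraph (Fin n)) 1 := by
    refine ⟨fun i => if i = 0 then SimpleGraph.cycleGraph n else ⊤, by simp, by simp, ?_⟩
    intro i hi
    obtain rfl : i = 0 := by omega
    simpa using hs
  unfold marcelloNumber
  apply le_antisymm (Nat.sInf_le h1)
  apply le_csInf ⟨1, h1⟩
  rintro k ⟨c, hc0, hck, -⟩
  by_contra hk
  obtain rfl : k = 0 := by omega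
  rw [hc0] at hck
  obtain ⟨m, rfl⟩ : ∃ m, n = m + 4 := ⟨n - 4, by omega⟩
  have h0 := mdeg_cyc m 0
  rw [hck] at h0
  have : (⊤ : SimpleGraph (Fin (m+4))).neighborSet 0 = {0}ᶜ := by
    ext x; simp [eq_comm]
  rw [mdeg, this, Set.ncard_compl] at h0
  simp at h0
end

section
/- Let n ≥ 3 and let S_{1,n} be the star on n + 1 vertices (one center adjacent to n pairwise non-adjacent leaves). If there is a Marcello chain of length k from the cycle graph C_n to the complete graph K_n, then there is a Marcello chain of length at most k + 1 from S_{1,n} to the complete graph K_{n+1}; hence ϖ(S_{1,n}) ≤ ϖ(C_n) + 1. -/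
open SimpleGraph

attribute [local instance] Classical.propDecidable

abbrev coneG {n : ℕ} (G : SimpleGraph (Fin n)) : SimpleGraph (Fin 1 ⊕ Fin n) :=
  graphJoin (⊤ : SimpleGraph (Fin 1)) G

lemma coneG_diff {n : ℕ} (G G' : SimpleGraph (Fin n)) :
    (coneG G').edgeSet \ (coneG G).edgeSet
      = Sym2.map Sum.inr '' (G'.edgeSet \ G.edgeSet) := by
  ext e
  induction e with | _ a b
  constructor
  · rintro ⟨h1, h2⟩
    rw [SimpleGraph.mem_edgeSet] at h1 h2
    rcases a with a | a <;> rcases b with b | b <;>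
      simp [coneG, graphJoin] at h1 h2
    · exact absurd h2 h1
    · exact ⟨s(a, b), ⟨h1, h2⟩, by simp⟩
  · rintro ⟨e0, ⟨h1, h2⟩, h⟩
    rw [← h]
    induction e0 with | _ x y
    constructor
    · simpa [coneG, graphJoin] using h1
    · simpa [coneG, graphJoin] using h2

lemma coneG_mdeg {n : ℕ} (G : SimpleGraph (Fin n)) (v : Fin n) :
    mdeg (coneG G) (Sum.inr v) = mdeg G v + 1 := by
  unfold mdeg
  have : (coneG G).neighborSet (Sum.inr v)
      = insert (Sum.inl 0) (Sum.inr '' G.neighborSet v) := by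
    ext x
    rcases x with x | x
    · simp [coneG, graphJoin, Subsingleton.elim x 0]
    · simp [coneG, graphJoin]
  rw [this, Set.ncard_insert_of_notMem (by simp) (Set.toFinite _),
    Set.ncard_image_of_injective _ Sum.inr_injective]

lemma coneG_step {n : ℕ} (G G' : SimpleGraph (Fin n)) (hle : G ≤ G')
    (f : Sym2 (Fin n) → Fin n)
    (h1 : ∀ e ∈ G'.edgeSet \ G.edgeSet, f e ∈ e)
    (h2 : ∀ v, (∃ e ∈ G'.edgeSet \ G.edgeSet, f e = v) → mdeg G v < n - 1)
    (h3 : ∀ v, ((G'.edgeSet \ G.edgeSet) ∩ {e | f e = v}).ncard ≤ mdeg G v + 1) :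
    MarcelloStep (coneG G) (coneG G') := by
  have hinj : Function.Injective (Sym2.map (Sum.inr : Fin n → Fin 1 ⊕ Fin n)) :=
    Sym2.map.injective Sum.inr_injective
  obtain ⟨F, hF⟩ : ∃ F : Sym2 (Fin 1 ⊕ Fin n) → Fin 1 ⊕ Fin n,
      ∀ e, F (Sym2.map Sum.inr e) = Sum.inr (f e) :=
    ⟨Function.extend (Sym2.map Sum.inr) (fun e => Sum.inr (f e)) (fun _ => Sum.inl 0),
      fun e => hinj.extend_apply _ _ e⟩
  refine ⟨?_, F, ?_, ?_, ?_⟩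
  · intro a b h
    rcases a with a | a <;> rcases b with b | b <;>
      simp [coneG, graphJoin] at h ⊢
    · exact h
    · exact hle h
  · rw [coneG_diff]
    rintro _ ⟨e, he, rfl⟩
    rw [hF, Sym2.mem_map]
    exact ⟨_, h1 e he, rfl⟩
  · rw [coneG_diff]
    rintro v ⟨_, ⟨e, he, rfl⟩, rfl⟩
    rw [hF, coneG_mdeg]
    have := h2 _ ⟨e, he, rfl⟩
    simp
    omega
  · intro v
    rw [coneG_diff]
    rcases v with v | v
    · have : (Sym2.map Sum.inr '' (G'.edgeSet \ G.edgeSet)) ∩ {e | F e = Sum.inl v} = ∅ := by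
        ext x
        simp only [Set.mem_inter_iff, Set.mem_empty_iff_false, iff_false]
        rintro ⟨⟨e, he, rfl⟩, h⟩
        rw [Set.mem_setOf_eq, hF] at h
        cases h
      rw [this]; simp
    · have : (Sym2.map Sum.inr '' (G'.edgeSet \ G.edgeSet)) ∩ {e | F e = Sum.inr v}
          ⊆ Sym2.map Sum.inr '' ((G'.edgeSet \ G.edgeSet) ∩ {e | f e = v}) := by
        rintro _ ⟨⟨e, he, rfl⟩, h⟩
        rw [Set.mem_setOf_eq, hF] at h
        exact ⟨e, ⟨he, Sum.inr_injective h⟩, rfl⟩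
      refine (Set.ncard_le_ncard this (Set.toFinite _)).trans ?_
      rw [Set.ncard_image_of_injective _ hinj, coneG_mdeg]
      exact h3 v

lemma coneG_star {n : ℕ} (hn : 3 ≤ n) :
    MarcelloStep (coneG (⊥ : SimpleGraph (Fin n))) (coneG (cycleGraph n)) := by
  obtain ⟨m, rfl⟩ : ∃ m, n = m + 2 := ⟨n - 2, by omega⟩
  have hd : ∀ v, mdeg (⊥ : SimpleGraph (Fin (m + 2))) v = 0 := by
    intro v
    have : (⊥ : SimpleGraph (Fin (m + 2))).neighborSet v = ∅ := by ext; simp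
    simp [mdeg, this]
  have key : ∀ e : Sym2 (Fin (m + 2)), ∃ v, e ∈ (cycleGraph (m + 2)).edgeSet → e = s(v, v + 1) := by
    intro e
    induction e with | _ a b
    by_cases h : (cycleGraph (m + 2)).Adj a b
    · rcases cycleGraph_adj.1 h with h | h
      · exact ⟨b, fun _ => by rw [← h, add_sub_cancel, Sym2.eq_swap]⟩
      · exact ⟨a, fun _ => by rw [← h, add_sub_cancel]⟩
    · exact ⟨a, fun h' => absurd h' h⟩
  choose f hf using key
  refine coneG_step _ _ bot_le f ?_ ?_ ?_
  · rintro e ⟨he, -⟩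
    have h : f e ∈ s(f e, f e + 1) := Sym2.mem_mk_left _ _
    rwa [← hf e he] at h
  · intro v _
    rw [hd]; omega
  · intro v
    rw [hd, zero_add, ← Set.ncard_singleton s(v, v + 1)]
    refine Set.ncard_le_ncard ?_ (Set.toFinite _)
    rintro e ⟨⟨he, -⟩, h⟩
    rw [Set.mem_setOf_eq] at h
    rw [Set.mem_singleton_iff, ← h]
    exact hf e he

/-- `ϖ(S_{1,n}) ≤ ϖ(C_n) + 1`: if the cycle `C_n` has a Marcello chain of length `k`
to `K_n`, then the star `S_{1,n} = K_1 + N_n` has one of length at most `k + 1`. -/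
theorem marcello_star_le_cycle (n : ℕ) (hn : 3 ≤ n) (k : ℕ)
    (hchain : MarcelloChain (SimpleGraph.cycleGraph n) (⊤ : SimpleGraph (Fin n)) k) :
    ∃ k' ≤ k + 1,
      MarcelloChain (graphJoin (⊤ : SimpleGraph (Fin 1)) (⊥ : SimpleGraph (Fin n)))
        (⊤ : SimpleGraph (Fin 1 ⊕ Fin n)) k' := by
  obtain ⟨c, h0, hk, hs⟩ := hchain
  refine ⟨k + 1, le_rfl, fun i => Nat.casesOn i (coneG ⊥) (fun j => coneG (c j)), rfl, ?_, ?_⟩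
  · show coneG (c k) = ⊤
    rw [hk]
    ext a b
    rcases a with a | a <;> rcases b with b | b <;> simp [coneG, graphJoin]
  · intro i hi
    cases i with
    | zero =>
      show MarcelloStep (coneG ⊥) (coneG (c 0))
      rw [h0]
      exact coneG_star hn
    | succ j =>
      show MarcelloStep (coneG (c j)) (coneG (c (j + 1)))
      obtain ⟨hle, f, h1, h2, h3⟩ := hs j (by omega)
      refine coneG_step _ _ hle f h1 (fun v hv => ?_) (fun v => (h3 v).trans (Nat.le_succ _))
      simpa using (h2 v hv).2
end

section
/- Let G be the graph on four vertices v_1, v_2, v_3, v_4 with edge set {v_1 v_2, v_2 v_3} (the disjoint union P_3 ⊔ K_1 of a path on three vertices and an isolated vertex). Although (∑_{v : 0 < deg_G(v) < 3} deg_G(v)) + |E(G)| = 6 = 4·3/2, there is no Marcello step from G to the complete graph K_4; hence the converse of the inequality criterion for ϖ(G) = 1 fails. -/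
open SimpleGraph

attribute [local instance] Classical.propDecidable

/-- The graph on four vertices with edge set `{v₁v₂, v₂v₃}`, i.e. `P₃ ⊔ K₁`. -/
def counterexampleGraph : SimpleGraph (Fin 4) :=
  SimpleGraph.fromEdgeSet {s((0 : Fin 4), (1 : Fin 4)), s((1 : Fin 4), (2 : Fin 4))}

theorem cg_adj (a b : Fin 4) : counterexampleGraph.Adj a b ↔
    ((a = 0 ∧ b = 1) ∨ (a = 1 ∧ b = 0) ∨ (a = 1 ∧ b = 2) ∨ (a = 2 ∧ b = 1)) := by
  unfold counterexampleGraph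
  fin_cases a <;> fin_cases b <;> simp

theorem cg_deg0 : mdeg counterexampleGraph 0 = 1 := by
  have h : counterexampleGraph.neighborSet 0 = {1} := by
    ext b; fin_cases b <;> simp [cg_adj]
  rw [mdeg, h, Set.ncard_singleton]

theorem cg_deg1 : mdeg counterexampleGraph 1 = 2 := by
  have h : counterexampleGraph.neighborSet 1 = {0, 2} := by
    ext b; fin_cases b <;> simp [cg_adj]
  rw [mdeg, h, Set.ncard_pair (by decide)]

theorem cg_deg2 : mdeg counterexampleGraph 2 = 1 := by
  have h : counterexampleGraph.neighborSet 2 = {1} := by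
    ext b; fin_cases b <;> simp [cg_adj]
  rw [mdeg, h, Set.ncard_singleton]

theorem cg_deg3 : mdeg counterexampleGraph 3 = 0 := by
  have h : counterexampleGraph.neighborSet 3 = ∅ := by
    ext b; fin_cases b <;> simp [cg_adj]
  rw [mdeg, h, Set.ncard_empty]

theorem cg_edges : counterexampleGraph.edgeSet.ncard = 2 := by
  have h : counterexampleGraph.edgeSet =
      {s((0 : Fin 4), (1 : Fin 4)), s((1 : Fin 4), (2 : Fin 4))} := by
    ext e
    induction e using Sym2.ind with
    | _ a b =>
      rw [SimpleGraph.mem_edgeSet, cg_adj]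
      fin_cases a <;> fin_cases b <;> simp
  rw [h, Set.ncard_pair (by simp)]

/-- Although `∑_{0 < deg v < 3} deg v + |E(G)| = 6 = 4·3/2`, no Marcello step
completes `counterexampleGraph`: the converse of the inequality criterion fails. -/
theorem converse_fails :
    marcelloSum counterexampleGraph + counterexampleGraph.edgeSet.ncard = 6 ∧
      ¬ MarcelloStep counterexampleGraph (⊤ : SimpleGraph (Fin 4)) := by
  refine ⟨?_, ?_⟩
  · rw [cg_edges, marcelloSum, Finset.sum_filter, Fin.sum_univ_four, cg_deg0, cg_deg1,
      cg_deg2, cg_deg3]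
    simp
  · rintro ⟨-, f, hf, hpos, hle⟩
    have new : ∀ a b : Fin 4, a ≠ b → ¬ counterexampleGraph.Adj a b →
        s(a, b) ∈ (⊤ : SimpleGraph (Fin 4)).edgeSet \ counterexampleGraph.edgeSet :=
      fun a b h1 h2 => ⟨by simpa using h1, h2⟩
    have n02 := new 0 2 (by decide) (by simp [cg_adj])
    have n03 := new 0 3 (by decide) (by simp [cg_adj])
    have n23 := new 2 3 (by decide) (by simp [cg_adj])
    have no3 : ∀ e ∈ (⊤ : SimpleGraph (Fin 4)).edgeSet \ counterexampleGraph.edgeSet,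
        f e ≠ 3 := by
      intro e he h3
      have := (hpos 3 ⟨e, he, h3⟩).1
      rw [cg_deg3] at this
      omega
    have f03 : f s(0, 3) = 0 := (Sym2.mem_iff.1 (hf _ n03)).resolve_right (no3 _ n03)
    have f23 : f s(2, 3) = 2 := (Sym2.mem_iff.1 (hf _ n23)).resolve_right (no3 _ n23)
    rcases Sym2.mem_iff.1 (hf _ n02) with h | h
    · have h0 := hle 0
      rw [cg_deg0, Set.ncard_le_one] at h0
      have := h0 _ ⟨n02, h⟩ _ ⟨n03, f03⟩
      simp at this
    · have h0 := hle 2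
      rw [cg_deg2, Set.ncard_le_one] at h0
      have := h0 _ ⟨n02, h⟩ _ ⟨n23, f23⟩
      simp at this
end

section
/- Fix n ≥ 2. For every k ∈ ℕ there exists m ∈ ℕ such that there is no Marcello chain of length at most k from the disjoint union P_n ⊔ N_m (the path on n vertices together with m isolated vertices) to the complete graph on its n + m vertices; consequently ϖ(P_n ∪ N_m) → ∞ as m → ∞. -/
open SimpleGraph

attribute [local instance] Classical.propDecidable

theorem ms_sum_mdeg {V : Type*} [Fintype V] (G : SimpleGraph V) :
    ∑ v, mdeg G v = 2 * G.edgeSet.ncard := by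
  have h := G.sum_degrees_eq_twice_card_edges
  have h2 : G.edgeSet.ncard = G.edgeFinset.card := by
    rw [← Set.ncard_coe_finset, SimpleGraph.coe_edgeFinset]
  rw [h2, ← h]
  refine Finset.sum_congr rfl fun v _ => ?_
  rw [mdeg, ← SimpleGraph.card_neighborFinset_eq_degree, ← Set.ncard_coe_finset,
    SimpleGraph.coe_neighborFinset]

theorem ms_step {V : Type*} [Fintype V] {G G' : SimpleGraph V} (h : MarcelloStep G G') :
    G'.edgeSet.ncard ≤ 3 * G.edgeSet.ncard := by
  obtain ⟨-, f, -, -, hf⟩ := h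
  have h1 : (G'.edgeSet \ G.edgeSet).ncard ≤ 2 * G.edgeSet.ncard := by
    rw [← ms_sum_mdeg, Set.ncard_eq_toFinset_card',
      Finset.card_eq_sum_card_fiberwise (f := f) (t := Finset.univ) (fun _ _ => Finset.mem_univ _)]
    refine Finset.sum_le_sum fun v _ => le_trans (le_of_eq ?_) (hf v)
    rw [← Set.ncard_coe_finset]
    congr 1
    ext e
    simp
  have h2 := Set.ncard_le_ncard_sdiff_add_ncard G'.edgeSet G.edgeSet (Set.toFinite _)
  omega

theorem ms_iter {V : Type*} [Fintype V] (c : ℕ → SimpleGraph V) (j : ℕ)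
    (h : ∀ i < j, MarcelloStep (c i) (c (i + 1))) :
    (c j).edgeSet.ncard ≤ 3 ^ j * (c 0).edgeSet.ncard := by
  induction j with
  | zero => simp
  | succ j ih =>
    have h1 := ih fun i hi => h i (by omega)
    have h2 := ms_step (h j (by omega))
    rw [pow_succ]
    nlinarith

/-- For fixed `n ≥ 2` and every `k`, there is `m` such that no Marcello chain of length
at most `k` completes `P_n ⊔ N_m`; hence `ϖ(P_n ∪ N_m) → ∞` as `m → ∞`. -/
theorem marcello_path_union_null_unbounded (n : ℕ) (hn : 2 ≤ n) (k : ℕ) :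
    ∃ m : ℕ, ∀ j ≤ k,
      ¬ MarcelloChain (SimpleGraph.pathGraph n ⊕g (⊥ : SimpleGraph (Fin m)))
        (⊤ : SimpleGraph (Fin n ⊕ Fin m)) j := by
  refine ⟨3 ^ k * (n * n) + 1, fun j hj => ?_⟩
  generalize hm : 3 ^ k * (n * n) + 1 = m
  rintro ⟨c, h0, h1, hc⟩
  have h := ms_iter c j hc
  rw [h0, h1] at h
  have ha : (SimpleGraph.pathGraph n ⊕g (⊥ : SimpleGraph (Fin m))).edgeSet.ncard ≤ n * n := by
    have hs : (SimpleGraph.pathGraph n ⊕g (⊥ : SimpleGraph (Fin m))).edgeSet ⊆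
        (fun p : Fin n × Fin n => (s(Sum.inl p.1, Sum.inl p.2) : Sym2 (Fin n ⊕ Fin m))) ''
          Set.univ := by
      intro e
      induction e using Sym2.ind with
      | _ x y =>
        intro he
        rw [SimpleGraph.mem_edgeSet] at he
        rcases x with x | x <;> rcases y with y | y
        · exact ⟨(x, y), trivial, rfl⟩
        · simp at he
        · simp at he
        · simp at he
    refine (Set.ncard_le_ncard hs (Set.toFinite _)).trans
      ((Set.ncard_image_le Set.finite_univ).trans ?_)
    simp [Set.ncard_univ]
  have hb : m ≤ (⊤ : SimpleGraph (Fin n ⊕ Fin m)).edgeSet.ncard := by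
    have hi : Function.Injective
        (fun i : Fin m => (s(Sum.inl ⟨0, by omega⟩, Sum.inr i) : Sym2 (Fin n ⊕ Fin m))) := by
      intro a b hab
      simpa using hab
    have hr := Set.ncard_image_of_injective Set.univ hi
    rw [Set.ncard_univ, Nat.card_fin] at hr
    refine hr.symm.le.trans (Set.ncard_le_ncard ?_ (Set.toFinite _))
    rintro _ ⟨i, -, rfl⟩
    simp
  have hp : 3 ^ j ≤ 3 ^ k := Nat.pow_le_pow_right (by norm_num) hj
  have := Nat.mul_le_mul hp ha
  omega
end
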